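/- arXiv:2209.12718 — 3 statements merged into one kernel-verified Lean document; each statement's English description precedes it below -/
import Mathlib

section
/- Let (R, m) be a Noetherian local ring of positive depth and x ∈ m a non-zerodivisor on R. Then R satisfies (SAC) if and only if R/xR satisfies (SAC). -/
open CategoryTheory

/-- The `i`-th Ext group of `R`-modules `M` and `N`. -/
noncomputable abbrev ExtGroup (R : Type) [CommRing R] (M N : ModuleCat.{0} R) (i : ℕ) : Type :=
  (((Ext R (ModuleCat.{0} R) i).obj (Opposite.op M)).obj N)

/-- The symmetric Auslander condition (SAC): for every finitely generated `R`-module `M`,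
if `Ext^i(M,R) = 0` for all `i > 0` and `Ext^i(M,M) = 0` for `i ≫ 0`,
then `Ext^i(M,M) = 0` for all `i > 0`. -/
def SAC (R : Type) [CommRing R] : Prop :=
  ∀ M : ModuleCat.{0} R, Module.Finite R M →
    (∀ i : ℕ, 0 < i → Subsingleton (ExtGroup R M (ModuleCat.of R R) i)) →
    (∃ N : ℕ, ∀ i : ℕ, N < i → Subsingleton (ExtGroup R M M i)) →
    ∀ i : ℕ, 0 < i → Subsingleton (ExtGroup R M M i)

/-!
Write `A = R / (x)`. Two facts relate `Ext` over `R` and over `A`: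

* (Rees) if `x` is regular on `R` and on `M`, then `Ext_A^i(M / xM, N) = Ext_R^i(M, N)` for every
  `A`-module `N`;
* for `A`-modules `N` and `Y` there is a long exact sequence
  `⋯ → Ext_A^i(N, Y) → Ext_R^i(N, Y) → Ext_A^(i-1)(N, Y) → Ext_A^(i+1)(N, Y) → ⋯`. It comes from
  the four-term sequence `0 → N → K / xK → F / xF → N → 0` which the snake lemma attaches to
  multiplication by `x` on a free presentation `0 → K → F → N → 0` over `R`.

Moreover, if `Ext_R^i(M, R) = 0` in the relevant degrees, then a syzygy of `M` has the same
self-extensions as `M`.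

If `A` satisfies (SAC) and `M` is an `R`-module, pass to a syzygy `K` of `M`, on which `x` is
regular: (SAC) for the `A`-module `K / xK` kills `Ext_R^i(K, K / xK)`, and Nakayama's lemma
kills `Ext_R^i(K, K)`.

If `R` satisfies (SAC) and `N` is an `A`-module, then `Ext_R^1(N, R)` need not vanish, so (SAC) is
applied to the syzygy of `N` over `R` instead of `N`. This gives `Ext_R^i(N, N) = 0` for `i ≥ 2`,
so that `Ext_A^i(N, N)` embeds in `Ext_A^(i+2)(N, N)` for `i ≥ 1`, and all of these vanish because
the late ones do.
-/

section LongExactSequences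

open CategoryTheory.Abelian

universe w v u

variable {C : Type u} [Category.{v} C] [Abelian C] [HasExt.{w} C] {S : ShortComplex C}

lemma subsingleton_ext_to_X₁ (hS : S.ShortExact) {X : C} {i : ℕ}
    (h₃ : Subsingleton (Abelian.Ext X S.X₃ i)) (h₂ : Subsingleton (Abelian.Ext X S.X₂ (i + 1))) :
    Subsingleton (Abelian.Ext X S.X₁ (i + 1)) := by
  refine subsingleton_of_forall_eq 0 fun α ↦ ?_
  obtain ⟨β, rfl⟩ := Ext.covariant_sequence_exact₁ X hS α (Subsingleton.elim _ _) rfl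
  rw [Subsingleton.elim β 0, Ext.zero_comp]

lemma subsingleton_ext_to_X₃ (hS : S.ShortExact) {X : C} {i : ℕ}
    (h₂ : Subsingleton (Abelian.Ext X S.X₂ i)) (h₁ : Subsingleton (Abelian.Ext X S.X₁ (i + 1))) :
    Subsingleton (Abelian.Ext X S.X₃ i) := by
  refine subsingleton_of_forall_eq 0 fun α ↦ ?_
  obtain ⟨β, rfl⟩ := Ext.covariant_sequence_exact₃ X hS α rfl (Subsingleton.elim _ _)
  rw [Subsingleton.elim β 0, Ext.zero_comp]

lemma subsingleton_ext_from_X₁ (hS : S.ShortExact) {Y : C} {i : ℕ}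
    (h₂ : Subsingleton (Abelian.Ext S.X₂ Y i)) (h₃ : Subsingleton (Abelian.Ext S.X₃ Y (i + 1))) :
    Subsingleton (Abelian.Ext S.X₁ Y i) := by
  refine subsingleton_of_forall_eq 0 fun α ↦ ?_
  obtain ⟨β, rfl⟩ := Ext.contravariant_sequence_exact₁ hS Y α (add_comm 1 i)
    (Subsingleton.elim _ _)
  rw [Subsingleton.elim β 0, Ext.comp_zero]

lemma subsingleton_ext_from_X₂ (hS : S.ShortExact) {Y : C} {i : ℕ}
    (h₁ : Subsingleton (Abelian.Ext S.X₁ Y i)) (h₃ : Subsingleton (Abelian.Ext S.X₃ Y i)) :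
    Subsingleton (Abelian.Ext S.X₂ Y i) := by
  refine subsingleton_of_forall_eq 0 fun α ↦ ?_
  obtain ⟨β, rfl⟩ := Ext.contravariant_sequence_exact₂ hS Y α (Subsingleton.elim _ _)
  rw [Subsingleton.elim β 0, Ext.comp_zero]

lemma subsingleton_ext_from_X₃ (hS : S.ShortExact) {Y : C} {i : ℕ}
    (h₁ : Subsingleton (Abelian.Ext S.X₁ Y i)) (h₂ : Subsingleton (Abelian.Ext S.X₂ Y (i + 1))) :
    Subsingleton (Abelian.Ext S.X₃ Y (i + 1)) := by
  refine subsingleton_of_forall_eq 0 fun α ↦ ?_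
  obtain ⟨β, rfl⟩ := Ext.contravariant_sequence_exact₃ hS Y α (Subsingleton.elim _ _)
    (add_comm 1 i)
  rw [Subsingleton.elim β 0, Ext.comp_zero]

lemma subsingleton_ext_dimension_shift (hS : S.ShortExact) [Projective S.X₂] (Y : C) (i : ℕ) :
    Subsingleton (Abelian.Ext S.X₃ Y (i + 2)) ↔ Subsingleton (Abelian.Ext S.X₁ Y (i + 1)) :=
  ⟨subsingleton_ext_from_X₁ hS (Ext.subsingleton_of_projective _ _ i),
    fun h ↦ subsingleton_ext_from_X₃ hS h (Ext.subsingleton_of_projective _ _ (i + 1))⟩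

lemma subsingleton_ext_one_iff_forall_extends (hS : S.ShortExact) [Projective S.X₂] (Y : C) :
    Subsingleton (Abelian.Ext S.X₃ Y 1) ↔ ∀ u : S.X₁ ⟶ Y, ∃ v : S.X₂ ⟶ Y, S.f ≫ v = u := by
  refine ⟨fun h u ↦ ?_, fun h ↦ subsingleton_of_forall_eq 0 fun α ↦ ?_⟩
  · obtain ⟨β, hβ⟩ := Ext.contravariant_sequence_exact₁ hS Y (Ext.mk₀ u) (add_comm 1 0)
      (Subsingleton.elim _ _)
    obtain ⟨v, rfl⟩ := (Ext.mk₀_bijective _ _).2 β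
    rw [Ext.mk₀_comp_mk₀] at hβ
    exact ⟨v, (Ext.mk₀_bijective _ _).1 hβ⟩
  · obtain ⟨β, rfl⟩ := Ext.contravariant_sequence_exact₃ hS Y α (Ext.eq_zero_of_projective _)
      (add_comm 1 0)
    obtain ⟨u, rfl⟩ := (Ext.mk₀_bijective _ _).2 β
    obtain ⟨v, rfl⟩ := h u
    rw [← Ext.mk₀_comp_mk₀]
    exact hS.extClass_comp_assoc _

lemma subsingleton_ext_syzygy_self_iff (hS : S.ShortExact) [Projective S.X₂] {i : ℕ}
    (h₁ : Subsingleton (Abelian.Ext S.X₃ S.X₂ (i + 1)))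
    (h₂ : Subsingleton (Abelian.Ext S.X₃ S.X₂ (i + 2))) :
    Subsingleton (Abelian.Ext S.X₁ S.X₁ (i + 1)) ↔
      Subsingleton (Abelian.Ext S.X₃ S.X₃ (i + 1)) := by
  rw [← subsingleton_ext_dimension_shift hS]
  exact ⟨subsingleton_ext_to_X₃ hS h₁, fun h ↦ subsingleton_ext_to_X₁ hS h h₂⟩

end LongExactSequences

section Modules

open CategoryTheory.Abelian

universe v u

variable {R : Type u} [CommRing R]

lemma subsingleton_ext_pi [Small.{v} R] {ι : Type} [Finite ι] {M : ModuleCat.{v} R} {N : Type v}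
    [AddCommGroup N] [Module R N] {i : ℕ}
    (h : Subsingleton (Abelian.Ext M (ModuleCat.of R N) i)) :
    Subsingleton (Abelian.Ext M (ModuleCat.of R (ι → N)) i) := by
  classical
  have := Fintype.ofFinite ι
  let proj (j : ι) : ModuleCat.of R (ι → N) ⟶ ModuleCat.of R N := ModuleCat.ofHom (.proj j)
  let single (j : ι) : ModuleCat.of R N ⟶ ModuleCat.of R (ι → N) :=
    ModuleCat.ofHom (.single R (fun _ ↦ N) j)
  have sum_proj_single : ∑ j, proj j ≫ single j = 𝟙 _ := by
    ext f k
    simp [proj, single, ModuleCat.hom_sum, Pi.single_apply]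
  refine subsingleton_of_forall_eq 0 fun α ↦ ?_
  calc
    α = ∑ j, (α.comp (Ext.mk₀ (proj j)) (add_zero i)).comp (Ext.mk₀ (single j)) (add_zero i) := by
        simp_rw [Ext.comp_assoc_of_second_deg_zero, Ext.mk₀_comp_mk₀, ← Ext.comp_sum, ← Ext.mk₀_sum,
          sum_proj_single, Ext.comp_mk₀_id]
    _ = 0 := Finset.sum_eq_zero fun j _ ↦ by
        rw [Subsingleton.elim (α.comp (Ext.mk₀ (proj j)) (add_zero i)) 0, Ext.zero_comp]

lemma subsingleton_ext_one_iff_forall_linearMap_extends [Small.{v} R] {K F M Y : Type v}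
    [AddCommGroup K] [Module R K] [AddCommGroup F] [Module R F] [Module.Projective R F]
    [AddCommGroup M] [Module R M] [AddCommGroup Y] [Module R Y] {f : K →ₗ[R] F} {g : F →ₗ[R] M}
    (hf : Function.Injective f) (hfg : Function.Exact f g) (hg : Function.Surjective g) :
    Subsingleton (Abelian.Ext (ModuleCat.of R M) (ModuleCat.of R Y) 1) ↔
      ∀ u : K →ₗ[R] Y, ∃ v, v ∘ₗ f = u := by
  have hS := ModuleCat.shortComplex_shortExact
    (ModuleCat.shortComplexOfCompEqZero f g hfg.linearMap_comp_eq_zero) hfg hf hg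
  rw [subsingleton_ext_one_iff_forall_extends hS]
  constructor
  · intro h u
    obtain ⟨v, hv⟩ := h (ModuleCat.ofHom u)
    exact ⟨v.hom, congrArg ModuleCat.Hom.hom hv⟩
  · intro h u
    obtain ⟨v, hv⟩ := h u.hom
    exact ⟨ModuleCat.ofHom v, ModuleCat.hom_ext hv⟩

section FourTerm

variable {A B P C : Type v} [AddCommGroup A] [Module R A] [AddCommGroup B] [Module R B]
  [AddCommGroup P] [Module R P] [AddCommGroup C] [Module R C]
  {f : A →ₗ[R] B} {g : B →ₗ[R] P} {h : P →ₗ[R] C}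

lemma exact_rangeRestrict (hfg : Function.Exact f g) : Function.Exact f g.rangeRestrict :=
  fun b ↦ Subtype.ext_iff.trans (hfg b)

lemma shortExact_rangeRestrict (hf : Function.Injective f) (hfg : Function.Exact f g) :
    (ModuleCat.shortComplexOfCompEqZero f g.rangeRestrict
      (exact_rangeRestrict hfg).linearMap_comp_eq_zero).ShortExact :=
  ModuleCat.shortComplex_shortExact _ (exact_rangeRestrict hfg) hf g.surjective_rangeRestrict

variable [Small.{v} R] [Module.Projective R P]

lemma subsingleton_ext_range_iff (hh : Function.Surjective h) (hgh : Function.Exact g h)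
    (Y : ModuleCat.{v} R) (i : ℕ) :
    Subsingleton (Abelian.Ext (ModuleCat.of R g.range) Y (i + 1)) ↔
      Subsingleton (Abelian.Ext (ModuleCat.of R C) Y (i + 2)) := by
  rw [← hgh.linearMap_ker_eq]
  exact (subsingleton_ext_dimension_shift (LinearMap.shortExact_shortComplexKer hh) Y i).symm

lemma subsingleton_ext_of_exact₄ (hf : Function.Injective f) (hfg : Function.Exact f g)
    (hgh : Function.Exact g h) (hh : Function.Surjective h) {Y : ModuleCat.{v} R} {i : ℕ}
    (hA : Subsingleton (Abelian.Ext (ModuleCat.of R A) Y (i + 1)))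
    (hC : Subsingleton (Abelian.Ext (ModuleCat.of R C) Y (i + 2))) :
    Subsingleton (Abelian.Ext (ModuleCat.of R B) Y (i + 1)) :=
  subsingleton_ext_from_X₂ (shortExact_rangeRestrict hf hfg) hA
    ((subsingleton_ext_range_iff hh hgh Y i).2 hC)

lemma subsingleton_ext_left_of_exact₄ (hf : Function.Injective f) (hfg : Function.Exact f g)
    (hgh : Function.Exact g h) (hh : Function.Surjective h) {Y : ModuleCat.{v} R} {i : ℕ}
    (hB : Subsingleton (Abelian.Ext (ModuleCat.of R B) Y (i + 1)))
    (hC : Subsingleton (Abelian.Ext (ModuleCat.of R C) Y (i + 3))) :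
    Subsingleton (Abelian.Ext (ModuleCat.of R A) Y (i + 1)) :=
  subsingleton_ext_from_X₁ (shortExact_rangeRestrict hf hfg) hB
    ((subsingleton_ext_range_iff hh hgh Y (i + 1)).2 hC)

end FourTerm

section Regular

variable {x : R} {N L : Type v} [AddCommGroup N] [Module R N] [AddCommGroup L] [Module R L]
  {p : N →ₗ[R] L}

lemma shortExact_lsmul (hreg : IsSMulRegular N x) (hp : Function.Surjective p)
    (hex : Function.Exact (LinearMap.lsmul R N x) p) :
    (ModuleCat.shortComplexOfCompEqZero _ p hex.linearMap_comp_eq_zero).ShortExact :=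
  ModuleCat.shortComplex_shortExact _ hex hreg hp

variable [Small.{v} R]

lemma ext_smul_surjective (hreg : IsSMulRegular N x) (hp : Function.Surjective p)
    (hex : Function.Exact (LinearMap.lsmul R N x) p) {M : ModuleCat.{v} R} {i : ℕ}
    (h : Subsingleton (Abelian.Ext M (ModuleCat.of R L) i)) :
    Function.Surjective fun α : Abelian.Ext M (ModuleCat.of R N) i ↦ x • α := by
  intro α
  obtain ⟨β, rfl⟩ := Ext.covariant_sequence_exact₂ M (shortExact_lsmul hreg hp hex) α
    (Subsingleton.elim (α := Abelian.Ext M (ModuleCat.of R L) i) _ _)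
  exact ⟨β, Ext.smul_eq_comp_mk₀ β x⟩

lemma subsingleton_ext_of_mem_jacobson [IsNoetherianRing R] (hx : x ∈ (⊥ : Ideal R).jacobson)
    [Module.Finite R N] (hreg : IsSMulRegular N x) (hp : Function.Surjective p)
    (hex : Function.Exact (LinearMap.lsmul R N x) p) {M : ModuleCat.{v} R} [Module.Finite R M]
    {i : ℕ} (h : Subsingleton (Abelian.Ext M (ModuleCat.of R L) i)) :
    Subsingleton (Abelian.Ext M (ModuleCat.of R N) i) := by
  have hle : (⊤ : Submodule R (Abelian.Ext M (ModuleCat.of R N) i)) ≤ Ideal.span {x} • ⊤ := by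
    intro α _
    obtain ⟨β, rfl⟩ := ext_smul_surjective hreg hp hex h α
    exact Submodule.smul_mem_smul (Ideal.mem_span_singleton_self x) Submodule.mem_top
  have := Submodule.eq_bot_of_le_smul_of_le_jacobson_bot _ _ Module.Finite.fg_top hle
    ((Ideal.span_singleton_le_iff_mem _).2 hx)
  rwa [← Submodule.subsingleton_iff R, ← subsingleton_iff_bot_eq_top, eq_comm]

lemma subsingleton_ext_of_mem_annihilator (hreg : IsSMulRegular N x) (hp : Function.Surjective p)
    (hex : Function.Exact (LinearMap.lsmul R N x) p) {M : ModuleCat.{v} R}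
    (hM : x ∈ Module.annihilator R M)
    {i : ℕ} (h : Subsingleton (Abelian.Ext M (ModuleCat.of R L) i)) :
    Subsingleton (Abelian.Ext M (ModuleCat.of R N) i) := by
  refine subsingleton_of_forall_eq 0 fun α ↦ ?_
  obtain ⟨β, rfl⟩ := ext_smul_surjective hreg hp hex h α
  have x_smul_id : x • 𝟙 M = 0 := by
    ext m
    exact Module.mem_annihilator.1 hM m
  calc x • β = (Ext.mk₀ (x • 𝟙 M)).comp β (zero_add i) := by
        rw [Ext.mk₀_smul, Ext.smul_comp, Ext.mk₀_id_comp]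
    _ = 0 := by rw [x_smul_id, Ext.mk₀_zero, Ext.zero_comp]

end Regular

end Modules

section ChangeOfRings

open CategoryTheory.Abelian
open scoped Pointwise

universe v u

variable {R : Type u} [CommRing R] {x : R} {K F M : Type v} [AddCommGroup K] [Module R K]
  [AddCommGroup F] [Module R F] [AddCommGroup M] [Module R M]
  {N : Type v} [AddCommGroup N] [Module R N] [Module (R ⧸ Ideal.span {x}) N]
  [IsScalarTower R (R ⧸ Ideal.span {x}) N]

variable (R x N) in
lemma mem_annihilator_of_isScalarTower_quotient_span :
    x ∈ Module.annihilator R N := by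
  refine Module.mem_annihilator.2 fun n ↦ ?_
  rw [← algebraMap_smul (R ⧸ Ideal.span {x}), Ideal.Quotient.algebraMap_eq,
    Ideal.Quotient.mk_singleton_self, zero_smul]

variable (x) in
/-- The reduction `K / xK → F / xF` of an `R`-linear map, as an `R / (x)`-linear map. -/
def reduceMod (f : K →ₗ[R] F) :
    QuotSMulTop x K →ₗ[R ⧸ Ideal.span {x}] QuotSMulTop x F :=
  (QuotSMulTop.map x f).extendScalarsOfSurjective Ideal.Quotient.mk_surjective

lemma reduceMod_surjective {f : K →ₗ[R] F} (hf : Function.Surjective f) :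
    Function.Surjective (reduceMod x f) :=
  QuotSMulTop.map_surjective x hf

lemma reduceMod_exact {f : K →ₗ[R] F} {g : F →ₗ[R] M} (hfg : Function.Exact f g)
    (hg : Function.Surjective g) : Function.Exact (reduceMod x f) (reduceMod x g) :=
  QuotSMulTop.map_exact x hfg hg

lemma reduceMod_injective {f : K →ₗ[R] F} {g : F →ₗ[R] M} (hM : IsSMulRegular M x)
    (hf : Function.Injective f) (hfg : Function.Exact f g) :
    Function.Injective (reduceMod x f) := by
  have hex := QuotSMulTop.map_first_exact_on_four_term_exact_of_isSMulRegular_last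
    ((LinearMap.exact_zero_iff_injective K f).2 hf) hfg hM
  rw [map_zero] at hex
  exact (LinearMap.exact_zero_iff_injective _ _).1 hex

variable (x M N) in
/-- The adjunction between reduction modulo `x` and restriction of scalars along `R → R / (x)`. -/
def quotSMulTopHomEquiv :
    (M →ₗ[R] N) ≃ (QuotSMulTop x M →ₗ[R ⧸ Ideal.span {x}] N) where
  toFun f := ((x • (⊤ : Submodule R M)).liftQ f (by
    rintro _ ⟨m, -, rfl⟩
    rw [DistribSMul.toLinearMap_apply, LinearMap.mem_ker, map_smul]
    exact Module.mem_annihilator.1 (mem_annihilator_of_isScalarTower_quotient_span R x N)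
      _)).extendScalarsOfSurjective Ideal.Quotient.mk_surjective
  invFun g := g.restrictScalars R ∘ₗ Submodule.mkQ _
  left_inv f := rfl
  right_inv g := LinearMap.ext fun m ↦ Submodule.Quotient.induction_on _ m fun _ ↦ rfl

lemma quotSMulTopHomEquiv_comp (f : K →ₗ[R] F) (g : F →ₗ[R] N) :
    quotSMulTopHomEquiv x K N (g ∘ₗ f) = quotSMulTopHomEquiv x F N g ∘ₗ reduceMod x f :=
  LinearMap.ext fun k ↦ Submodule.Quotient.induction_on _ k fun _ ↦ rfl

lemma forall_extends_reduceMod_iff (f : K →ₗ[R] F) :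
    (∀ u : QuotSMulTop x K →ₗ[R ⧸ Ideal.span {x}] N, ∃ v, v ∘ₗ reduceMod x f = u) ↔
      ∀ u : K →ₗ[R] N, ∃ v, v ∘ₗ f = u := by
  simp_rw [← (quotSMulTopHomEquiv x K N).forall_congr_right,
    ← (quotSMulTopHomEquiv x F N).exists_congr_right, ← quotSMulTopHomEquiv_comp,
    EmbeddingLike.apply_eq_iff_eq]

lemma shortExact_reduceMod {f : K →ₗ[R] F} {g : F →ₗ[R] M} (hM : IsSMulRegular M x)
    (hf : Function.Injective f) (hfg : Function.Exact f g) (hg : Function.Surjective g) :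
    (ModuleCat.shortComplexOfCompEqZero _ _
      (reduceMod_exact (x := x) hfg hg).linearMap_comp_eq_zero).ShortExact :=
  ModuleCat.shortComplex_shortExact _ (reduceMod_exact hfg hg) (reduceMod_injective hM hf hfg)
    (reduceMod_surjective hg)

lemma exists_free_surjective [Small.{v} R] (M : Type v) [AddCommGroup M] [Module R M] :
    ∃ (F : Type v) (_ : AddCommGroup F) (_ : Module R F) (_ : Module.Free R F) (g : F →ₗ[R] M),
      Function.Surjective g :=
  ⟨_, _, _, inferInstanceAs (Module.Free R (ModuleCat.of R M).projectiveShortComplex.X₂),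
    (ModuleCat.of R M).projectiveShortComplex.g.hom,
    (ModuleCat.shortExact_projectiveShortComplex (ModuleCat.of R M)).moduleCat_surjective_g⟩

lemma isSMulRegular_of_flat (hR : IsSMulRegular R x) (F : Type*) [AddCommGroup F] [Module R F]
    [Module.Flat R F] : IsSMulRegular F x :=
  Module.Flat.isSMulRegular_of_isRegular (isLeftRegular_iff_isRegular.1 hR)

theorem subsingleton_ext_quotSMulTop_iff [Small.{v} R] (hR : IsSMulRegular R x)
    (hM : IsSMulRegular M x) (i : ℕ) :
    Subsingleton (Abelian.Ext (ModuleCat.of (R ⧸ Ideal.span {x}) (QuotSMulTop x M))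
      (ModuleCat.of (R ⧸ Ideal.span {x}) N) (i + 1)) ↔
    Subsingleton (Abelian.Ext (ModuleCat.of R M) (ModuleCat.of R N) (i + 1)) := by
  induction i generalizing M with
  | zero =>
    obtain ⟨F, _, _, _, g, hg⟩ := exists_free_surjective (R := R) M
    have hker := g.ker.injective_subtype
    have hex := g.exact_subtype_ker_map
    rw [zero_add, subsingleton_ext_one_iff_forall_linearMap_extends hker hex hg,
      subsingleton_ext_one_iff_forall_linearMap_extends (reduceMod_injective hM hker hex)
        (reduceMod_exact hex hg) (reduceMod_surjective hg)]
    exact forall_extends_reduceMod_iff _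
  | succ i ih =>
    obtain ⟨F, _, _, _, g, hg⟩ := exists_free_surjective (R := R) M
    calc _ ↔ _ := subsingleton_ext_dimension_shift
          (shortExact_reduceMod hM g.ker.injective_subtype g.exact_subtype_ker_map hg) _ i
      _ ↔ _ := ih ((isSMulRegular_of_flat hR F).submodule g.ker x)
      _ ↔ _ := (subsingleton_ext_dimension_shift
        (LinearMap.shortExact_shortComplexKer hg) _ i).symm

lemma subsingleton_ext_quotSMulTop_ker_iff [Small.{v} R] [Module.Free R F]
    (hR : IsSMulRegular R x) {g : F →ₗ[R] M} (hg : Function.Surjective g) (i : ℕ) :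
    Subsingleton (Abelian.Ext (ModuleCat.of (R ⧸ Ideal.span {x}) (QuotSMulTop x g.ker))
      (ModuleCat.of (R ⧸ Ideal.span {x}) N) (i + 1)) ↔
    Subsingleton (Abelian.Ext (ModuleCat.of R M) (ModuleCat.of R N) (i + 2)) := by
  rw [subsingleton_ext_quotSMulTop_iff hR ((isSMulRegular_of_flat hR F).submodule g.ker x)]
  exact (subsingleton_ext_dimension_shift (LinearMap.shortExact_shortComplexKer hg) _ i).symm

lemma quotSMulTopHomEquiv_id_injective :
    Function.Injective (quotSMulTopHomEquiv x N N .id) := by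
  intro a b
  induction a using Submodule.Quotient.induction_on
  induction b using Submodule.Quotient.induction_on
  exact congrArg (Submodule.mkQ _)

lemma exact_reduceMod_quotSMulTopHomEquiv {f : K →ₗ[R] F} {g : F →ₗ[R] N}
    (hfg : Function.Exact f g) (hg : Function.Surjective g) :
    Function.Exact (reduceMod x f) (quotSMulTopHomEquiv x F N g) := by
  rw [← LinearMap.id_comp g, quotSMulTopHomEquiv_comp]
  exact (quotSMulTopHomEquiv_id_injective.comp_exact_iff_exact).2 (reduceMod_exact hfg hg)

lemma quotSMulTopHomEquiv_surjective {g : F →ₗ[R] N} (hg : Function.Surjective g) :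
    Function.Surjective (quotSMulTopHomEquiv x F N g) :=
  fun n ↦ (hg n).imp' (Submodule.mkQ _) fun _ ↦ id

lemma exists_injective_exact_reduceMod (hF : IsSMulRegular F x) {f : K →ₗ[R] F} {g : F →ₗ[R] N}
    (hf : Function.Injective f) (hfg : Function.Exact f g) (hg : Function.Surjective g) :
    ∃ δ : N →ₗ[R ⧸ Ideal.span {x}] QuotSMulTop x K,
      Function.Injective δ ∧ Function.Exact δ (reduceMod x f) := by
  have hN : LinearMap.lsmul R N x = 0 := LinearMap.ext fun n ↦
    Module.mem_annihilator.1 (mem_annihilator_of_isScalarTower_quotient_span R x N) n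
  have hιN : Function.Exact (LinearMap.id : N →ₗ[R] N) (LinearMap.lsmul R N x) := by
    simp [hN, Function.Exact]
  have hιF : Function.Exact (0 : PUnit →ₗ[R] F) (LinearMap.lsmul R F x) :=
    (LinearMap.exact_zero_iff_injective _ _).2 hF
  have hf' : f ∘ₗ LinearMap.lsmul R K x = LinearMap.lsmul R F x ∘ₗ f :=
    LinearMap.ext fun k ↦ map_smul f x k
  have hg' : g ∘ₗ LinearMap.lsmul R F x = LinearMap.lsmul R N x ∘ₗ g :=
    LinearMap.ext fun k ↦ map_smul g x k
  have hπK := LinearMap.exact_lsmul_mkQ_smul_top K x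
  have hπF := LinearMap.exact_lsmul_mkQ_smul_top F x
  let δ := SnakeLemma.δ' _ _ _ f g hfg f g hfg hf' hg' _ hιN _ hπK hg hf
  have hδ₁ : Function.Exact (0 : PUnit →ₗ[R] N) δ := SnakeLemma.exact_δ'_right _ _ _ f g hfg f g
    hfg hf' hg' _ hιF _ hιN _ hπK hg hf 0 (by simp) Function.injective_id
  have hδ₂ : Function.Exact δ (QuotSMulTop.map x f) := SnakeLemma.exact_δ'_left _ _ _ f g
    hfg f g hfg hf' hg' _ hιN _ hπK _ hπF hg hf _ rfl (Submodule.mkQ_surjective _)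
  exact ⟨LinearMap.extendScalarsOfSurjective Ideal.Quotient.mk_surjective δ,
    (LinearMap.exact_zero_iff_injective PUnit δ).1 hδ₁, hδ₂⟩

variable {Y : Type v} [AddCommGroup Y] [Module R Y] [Module (R ⧸ Ideal.span {x}) Y]
  [IsScalarTower R (R ⧸ Ideal.span {x}) Y] [Small.{v} R]

lemma subsingleton_ext_of_subsingleton_ext_quotient (hR : IsSMulRegular R x) {i : ℕ}
    (h₁ : Subsingleton (Abelian.Ext (ModuleCat.of (R ⧸ Ideal.span {x}) N)
      (ModuleCat.of (R ⧸ Ideal.span {x}) Y) (i + 1)))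
    (h₂ : Subsingleton (Abelian.Ext (ModuleCat.of (R ⧸ Ideal.span {x}) N)
      (ModuleCat.of (R ⧸ Ideal.span {x}) Y) (i + 2))) :
    Subsingleton (Abelian.Ext (ModuleCat.of R N) (ModuleCat.of R Y) (i + 2)) := by
  obtain ⟨F, _, _, _, g, hg⟩ := exists_free_surjective (R := R) N
  have hex := g.exact_subtype_ker_map
  obtain ⟨δ, hδ, hδ'⟩ := exists_injective_exact_reduceMod (isSMulRegular_of_flat hR F)
    g.ker.injective_subtype hex hg
  exact (subsingleton_ext_quotSMulTop_ker_iff hR hg i).1 <|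
    subsingleton_ext_of_exact₄ hδ hδ' (exact_reduceMod_quotSMulTopHomEquiv hex hg)
      (quotSMulTopHomEquiv_surjective hg) h₁ h₂

lemma subsingleton_ext_quotient_of_subsingleton_ext (hR : IsSMulRegular R x) {i : ℕ}
    (h : Subsingleton (Abelian.Ext (ModuleCat.of R N) (ModuleCat.of R Y) (i + 2)))
    (h₃ : Subsingleton (Abelian.Ext (ModuleCat.of (R ⧸ Ideal.span {x}) N)
      (ModuleCat.of (R ⧸ Ideal.span {x}) Y) (i + 3))) :
    Subsingleton (Abelian.Ext (ModuleCat.of (R ⧸ Ideal.span {x}) N)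
      (ModuleCat.of (R ⧸ Ideal.span {x}) Y) (i + 1)) := by
  obtain ⟨F, _, _, _, g, hg⟩ := exists_free_surjective (R := R) N
  have hex := g.exact_subtype_ker_map
  obtain ⟨δ, hδ, hδ'⟩ := exists_injective_exact_reduceMod (isSMulRegular_of_flat hR F)
    g.ker.injective_subtype hex hg
  exact subsingleton_ext_left_of_exact₄ hδ hδ' (exact_reduceMod_quotSMulTopHomEquiv hex hg)
    (quotSMulTopHomEquiv_surjective hg) ((subsingleton_ext_quotSMulTop_ker_iff hR hg i).2 h) h₃

end ChangeOfRings

section Comparison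

universe w v u

lemma subsingleton_derivedFunctor_ext_iff (R : Type*) [Ring R] {C : Type u} [Category.{v} C]
    [Abelian C] [Linear R C] [EnoughProjectives C] [HasExt.{w} C] (X Y : C) (i : ℕ) :
    Subsingleton (((Ext R C (i + 1)).obj (Opposite.op X)).obj Y) ↔
      Subsingleton (Abelian.Ext X Y (i + 1)) := by
  let P := projectiveResolution X
  have cocycle_iff : Subsingleton (((Ext R C (i + 1)).obj (Opposite.op X)).obj Y) ↔
      ∀ f : P.complex.X (i + 1) ⟶ Y, P.complex.d (i + 2) (i + 1) ≫ f = 0 →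
        ∃ g : P.complex.X i ⟶ Y, P.complex.d (i + 1) i ≫ g = f := by
    rw [← ModuleCat.isZero_iff_subsingleton, (P.isoExt (R := R) (i + 1) Y).isZero_iff,
      ← HomologicalComplex.exactAt_iff_isZero_homology,
      HomologicalComplex.exactAt_iff' _ i (i + 1) (i + 2) (by simp) (by simp),
      ShortComplex.moduleCat_exact_iff]
    rfl
  rw [cocycle_iff]
  refine ⟨fun h ↦ subsingleton_of_forall_eq 0 fun α ↦ ?_, fun h f hf ↦ ?_⟩
  · obtain ⟨f, hf, rfl⟩ := P.extMk_surjective α (i + 2) rfl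
    exact (P.extMk_eq_zero_iff f (i + 2) rfl hf i rfl).2 (h f hf)
  · exact (P.extMk_eq_zero_iff f (i + 2) rfl hf i rfl).1 (Subsingleton.elim _ _)

end Comparison

lemma sac_iff (R : Type) [CommRing R] :
    SAC R ↔ ∀ (M : Type) [AddCommGroup M] [Module R M] [Module.Finite R M],
      (∀ i, Subsingleton (Abelian.Ext (ModuleCat.of R M) (ModuleCat.of R R) (i + 1))) →
      (∀ᶠ i in Filter.atTop,
        Subsingleton (Abelian.Ext (ModuleCat.of R M) (ModuleCat.of R M) (i + 1))) →
      ∀ i, Subsingleton (Abelian.Ext (ModuleCat.of R M) (ModuleCat.of R M) (i + 1)) := by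
  have forall_pos_iff (P : ℕ → Prop) : (∀ i, 0 < i → P i) ↔ ∀ i, P (i + 1) :=
    ⟨fun h i ↦ h (i + 1) i.succ_pos, fun h i hi ↦ Nat.sub_add_cancel hi ▸ h (i - 1)⟩
  have eventually_iff (P : ℕ → Prop) :
      (∃ n, ∀ i, n < i → P i) ↔ ∀ᶠ i in Filter.atTop, P (i + 1) := by
    rw [← Filter.eventually_map (m := (· + 1)), Filter.map_add_atTop_eq_nat]
    simpa using (Filter.atTop_basis_Ioi.eventually_iff (q := P)).symm
  simp only [SAC, forall_pos_iff, eventually_iff, subsingleton_derivedFunctor_ext_iff]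
  exact ⟨fun h M _ _ hM ↦ h (ModuleCat.of R M) hM, fun h M hM ↦ h M⟩

lemma forall_of_eventually_of_forall_add_two {P : ℕ → Prop} (h : ∀ᶠ i in Filter.atTop, P i)
    (step : ∀ i, P (i + 2) → P i) (i : ℕ) : P i := by
  obtain ⟨n, hn⟩ := Filter.eventually_atTop.1 h
  have descend (m : ℕ) : P (i + 2 * m) → P i := by
    induction m with
    | zero => exact id
    | succ m ih => exact ih ∘ step (i + 2 * m)
  exact descend n (hn _ (by lia))

lemma exact_lsmul_mkQ_span_singleton {R : Type*} [CommRing R] (x : R) :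
    Function.Exact (LinearMap.lsmul R R x) (Ideal.span {x}).mkQ := by
  intro y
  simp [Ideal.Quotient.eq_zero_iff_mem, Ideal.mem_span_singleton', mul_comm x]

open Filter in
theorem SAC.of_quotient {R : Type} [CommRing R] [IsNoetherianRing R] {x : R}
    (hx : x ∈ (⊥ : Ideal R).jacobson) (hreg : IsSMulRegular R x)
    (hA : SAC (R ⧸ Ideal.span {x})) : SAC R := by
  rw [sac_iff] at hA ⊢
  intro M _ _ _ hMR hMM
  obtain ⟨n, π, hπ⟩ := Module.Finite.exists_fin' R M
  have hS := LinearMap.shortExact_shortComplexKer hπ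
  have hK : IsSMulRegular π.ker x := (isSMulRegular_of_flat hreg _).submodule π.ker x
  have hexR := exact_lsmul_mkQ_span_singleton x
  have hexK := LinearMap.exact_lsmul_mkQ_smul_top π.ker x
  have self_iff (i : ℕ) := subsingleton_ext_syzygy_self_iff hS
    (subsingleton_ext_pi (hMR i)) (subsingleton_ext_pi (hMR (i + 1)))
  have hKR (i : ℕ) : Subsingleton (Abelian.Ext (ModuleCat.of R π.ker) (ModuleCat.of R R) (i + 1)) :=
    (subsingleton_ext_dimension_shift hS _ i).1 (hMR (i + 1))
  have hKK := hMM.mono fun i ↦ (self_iff i).2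
  have := Module.Finite.of_restrictScalars_finite R (R ⧸ Ideal.span {x}) (QuotSMulTop x π.ker)
  have hTT := hA (QuotSMulTop x π.ker)
    (fun i ↦ (subsingleton_ext_quotSMulTop_iff hreg hK i).2 <| subsingleton_ext_to_X₃
      (shortExact_lsmul hreg (Submodule.mkQ_surjective _) hexR) (hKR i) (hKR (i + 1)))
    ((hKK.and ((tendsto_add_atTop_nat 1).eventually hKK)).mono fun i h ↦
      (subsingleton_ext_quotSMulTop_iff hreg hK i).2 <| subsingleton_ext_to_X₃
        (shortExact_lsmul hK (Submodule.mkQ_surjective _) hexK) h.1 h.2)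
  exact fun i ↦ (self_iff i).1 <| subsingleton_ext_of_mem_jacobson hx hK
    (Submodule.mkQ_surjective _) hexK ((subsingleton_ext_quotSMulTop_iff hreg hK i).1 (hTT i))

open Filter in
theorem SAC.quotient {R : Type} [CommRing R] [IsNoetherianRing R] {x : R}
    (hreg : IsSMulRegular R x) (hR : SAC R) : SAC (R ⧸ Ideal.span {x}) := by
  rw [sac_iff] at hR ⊢
  intro N _ _ _ hNA hNN
  let : Module R N := Module.compHom N (Ideal.Quotient.mk (Ideal.span {x}))
  have : IsScalarTower R (R ⧸ Ideal.span {x}) N := .of_algebraMap_smul fun _ _ ↦ rfl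
  have := Module.Finite.trans (R := R) (R ⧸ Ideal.span {x}) N
  obtain ⟨n, π, hπ⟩ := Module.Finite.exists_fin' R N
  have hS := LinearMap.shortExact_shortComplexKer hπ
  have hNR (i : ℕ) : Subsingleton (Abelian.Ext (ModuleCat.of R N) (ModuleCat.of R R) (i + 2)) :=
    subsingleton_ext_of_mem_annihilator hreg (Submodule.mkQ_surjective _)
      (exact_lsmul_mkQ_span_singleton x) (mem_annihilator_of_isScalarTower_quotient_span R x N)
      (subsingleton_ext_of_subsingleton_ext_quotient hreg (hNA i) (hNA (i + 1)))
  have self_iff (i : ℕ) := subsingleton_ext_syzygy_self_iff hS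
    (subsingleton_ext_pi (hNR i)) (subsingleton_ext_pi (hNR (i + 1)))
  have hKK : ∀ᶠ i in atTop,
      Subsingleton (Abelian.Ext (ModuleCat.of R π.ker) (ModuleCat.of R π.ker) (i + 1)) := by
    rw [← map_add_atTop_eq_nat 1, eventually_map]
    exact (hNN.and ((tendsto_add_atTop_nat 1).eventually hNN)).mono fun i h ↦
      (self_iff i).2 (subsingleton_ext_of_subsingleton_ext_quotient hreg h.1 h.2)
  have hKK' := hR π.ker (fun i ↦ (subsingleton_ext_dimension_shift hS _ i).1 (hNR i)) hKK
  exact forall_of_eventually_of_forall_add_two hNN fun i ↦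
    subsingleton_ext_quotient_of_subsingleton_ext hreg ((self_iff i).1 (hKK' (i + 1)))

theorem stmt_4_general (R : Type) [CommRing R] [IsNoetherianRing R] (x : R)
    (hx : x ∈ (⊥ : Ideal R).jacobson) (hreg : IsSMulRegular R x) :
    SAC R ↔ SAC (R ⧸ Ideal.span {x}) :=
  ⟨SAC.quotient hreg, SAC.of_quotient hx hreg⟩

/-- For a Noetherian local ring `R` of positive depth and a non-zerodivisor
`x` in the maximal ideal, `R` satisfies (SAC) iff `R/xR` satisfies (SAC). -/
theorem stmt_4 (R : Type) [CommRing R] [IsNoetherianRing R] [IsLocalRing R]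
    (hdepth : ∃ y ∈ IsLocalRing.maximalIdeal R, IsSMulRegular R y)
    (x : R) (hx : x ∈ IsLocalRing.maximalIdeal R) (hreg : IsSMulRegular R x) :
    SAC R ↔ SAC (R ⧸ Ideal.span {x}) :=
  stmt_4_general R x (IsLocalRing.maximalIdeal_le_jacobson _ hx) hreg
end

section
/- Let R be a Noetherian local ring and T an indeterminate. Then R satisfies (SAC) if and only if the power series ring R[[T]] satisfies (SAC). -/
open CategoryTheory

/-!
Let `x` be regular on `S` and lie in its Jacobson radical, with `A = S/xS`; the case of interest is
`S = R⟦X⟧`, `x = X`, `A = R`. If `x` is regular on an `S`-module `M` and kills `N`, then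
`Ext_S^{n+1}(M, N) = Ext_A^{n+1}(M/xM, N)`, as one sees by applying `A ⊗ -` to a free presentation
of `M`. When `N` is finitely generated and `x` is regular on `N`, the long exact sequence of
`0 → N → N → N/xN → 0` together with Nakayama's lemma then shows that `Ext_S^{n+1}(M, N)` vanishes
as soon as `Ext_A^{n+1}(M/xM, N/xN)` does, and that the latter vanishes if `Ext_S(M, N)` does in
degrees `n + 1` and `n + 2`. Taking `N = S` and `N = M`, the symmetric Auslander condition for `M`
over `S` is the one for `M/xM` over `A`.

For an arbitrary finitely generated `S`-module, pass to the kernel of a surjection from a finite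
free module: `x` is regular there, and the condition ascends from a syzygy to the module. In the
other direction an `A`-module `M` is `(S ⊗ M)/x(S ⊗ M)` whenever `S → A` has a section.
-/

universe w v u

section ExtVanishing

variable {C : Type u} [Category.{v} C] [Abelian C]

theorem subsingleton_ext_succ_iff_subsingleton_abelianExt (R : Type*) [Ring R] [Linear R C]
    [EnoughProjectives C] [HasExt.{w} C] (X Y : C) (n : ℕ) :
    Subsingleton (((Ext R C (n + 1)).obj (Opposite.op X)).obj Y) ↔
      Subsingleton (Abelian.Ext X Y (n + 1)) := by
  let P := projectiveResolution X
  have hcocycle : Subsingleton (Abelian.Ext X Y (n + 1)) ↔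
      ∀ f : P.complex.X (n + 1) ⟶ Y, P.complex.d (n + 2) (n + 1) ≫ f = 0 →
        ∃ g : P.complex.X n ⟶ Y, P.complex.d (n + 1) n ≫ g = f := by
    constructor
    · intro _ f hf
      exact (P.extMk_eq_zero_iff f (n + 2) rfl hf n rfl).1 (Subsingleton.elim _ _)
    · refine fun h => subsingleton_of_forall_eq 0 fun α => ?_
      obtain ⟨f, hf, rfl⟩ := P.extMk_surjective α (n + 2) rfl
      exact (P.extMk_eq_zero_iff f (n + 2) rfl hf n rfl).2 (h f hf)
  rw [hcocycle, (P.isoExt (R := R) (n + 1) Y).toLinearEquiv.toEquiv.subsingleton_congr,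
    ← ModuleCat.isZero_iff_subsingleton, ← HomologicalComplex.exactAt_iff_isZero_homology,
    HomologicalComplex.exactAt_iff' _ n (n + 1) (n + 2) (by simp) (by simp),
    ShortComplex.moduleCat_exact_iff]
  rfl

variable [HasExt.{w} C] {S : ShortComplex C} (hS : S.ShortExact)
include hS

theorem subsingleton_ext_X₃_of_X₂_of_X₁ {Z : C} {n : ℕ}
    (h₂ : Subsingleton (Abelian.Ext Z S.X₂ n))
    (h₁ : Subsingleton (Abelian.Ext Z S.X₁ (n + 1))) :
    Subsingleton (Abelian.Ext Z S.X₃ n) := by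
  refine subsingleton_of_forall_eq 0 fun α => ?_
  obtain ⟨β, rfl⟩ := Abelian.Ext.covariant_sequence_exact₃ Z hS α rfl (Subsingleton.elim _ _)
  rw [Subsingleton.elim β 0, Abelian.Ext.zero_comp]

theorem subsingleton_ext_X₁_of_X₃_of_X₂ {Z : C} {n : ℕ}
    (h₃ : Subsingleton (Abelian.Ext Z S.X₃ n))
    (h₂ : Subsingleton (Abelian.Ext Z S.X₂ (n + 1))) :
    Subsingleton (Abelian.Ext Z S.X₁ (n + 1)) := by
  refine subsingleton_of_forall_eq 0 fun α => ?_
  obtain ⟨β, rfl⟩ := Abelian.Ext.covariant_sequence_exact₁ Z hS α (Subsingleton.elim _ _) rfl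
  rw [Subsingleton.elim β 0, Abelian.Ext.zero_comp]

variable [Projective S.X₂]

theorem subsingleton_ext_X₃_add_two_iff (Y : C) (n : ℕ) :
    Subsingleton (Abelian.Ext S.X₃ Y (n + 2)) ↔ Subsingleton (Abelian.Ext S.X₁ Y (n + 1)) := by
  constructor <;> refine fun _ => subsingleton_of_forall_eq 0 fun α => ?_
  · obtain ⟨β, rfl⟩ := Abelian.Ext.contravariant_sequence_exact₁ hS Y α (add_comm 1 (n + 1))
      (Subsingleton.elim _ _)
    rw [Abelian.Ext.eq_zero_of_projective β, Abelian.Ext.comp_zero]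
  · obtain ⟨β, rfl⟩ := Abelian.Ext.contravariant_sequence_exact₃ hS Y α
      (Abelian.Ext.eq_zero_of_projective _) (add_comm 1 (n + 1))
    rw [Subsingleton.elim β 0, Abelian.Ext.comp_zero]

theorem subsingleton_ext_X₃_one_iff (Y : C) :
    Subsingleton (Abelian.Ext S.X₃ Y 1) ↔ ∀ f : S.X₁ ⟶ Y, ∃ g : S.X₂ ⟶ Y, S.f ≫ g = f := by
  constructor
  · intro _ f
    obtain ⟨β, hβ⟩ := Abelian.Ext.contravariant_sequence_exact₁ hS Y (Abelian.Ext.mk₀ f)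
      (add_zero 1) (Subsingleton.elim _ _)
    obtain ⟨g, rfl⟩ := Abelian.Ext.mk₀_bijective _ _ |>.2 β
    exact ⟨g, (Abelian.Ext.mk₀_bijective _ _).1 (by rw [← hβ, Abelian.Ext.mk₀_comp_mk₀])⟩
  · refine fun h => subsingleton_of_forall_eq 0 fun α => ?_
    obtain ⟨β, rfl⟩ := Abelian.Ext.contravariant_sequence_exact₃ hS Y α
      (Abelian.Ext.eq_zero_of_projective _) (add_zero 1)
    obtain ⟨f, rfl⟩ := Abelian.Ext.mk₀_bijective _ _ |>.2 β
    obtain ⟨g, rfl⟩ := h f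
    rw [← Abelian.Ext.mk₀_comp_mk₀,
      ← Abelian.Ext.comp_assoc _ _ _ (add_zero 1) (add_zero 0) (add_zero 1)]
    simp

end ExtVanishing

section BaseChange

open scoped TensorProduct

variable {S A : Type*} [CommRing S] [CommRing A] [Algebra S A]

theorem isSMulRegular_tensorProduct_of_exact [Algebra A S] [IsScalarTower A S A]
    (hsurj : Function.Surjective (algebraMap S A)) {x : S}
    (hx : Function.Exact (LinearMap.lsmul S S x) (Algebra.linearMap S A))
    (hS : IsRegular x) (M : Type*) [AddCommGroup M] [Module A M] :
    IsSMulRegular (S ⊗[A] M) x := by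
  have hinj := LinearMap.lTensor_injective_of_exact_of_flat
    ((Algebra.linearMap S A).restrictScalars A) hsurj
    ((LinearMap.lsmul S S x).restrictScalars A) hS.left hx M
  exact (LinearMap.lTensor_inj_iff_rTensor_inj M _).1 hinj

theorem forall_exists_comp_eq_baseChange_iff {K F N : Type*} [AddCommGroup K] [Module S K]
    [AddCommGroup F] [Module S F] [AddCommGroup N] [Module S N] [Module A N] [IsScalarTower S A N]
    (i : K →ₗ[S] F) :
    (∀ f : A ⊗[S] K →ₗ[A] N, ∃ g : A ⊗[S] F →ₗ[A] N, g ∘ₗ i.baseChange A = f) ↔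
      ∀ f : K →ₗ[S] N, ∃ g : F →ₗ[S] N, g ∘ₗ i = f := by
  have hcomp (g : F →ₗ[S] N) :
      g.liftBaseChange A ∘ₗ i.baseChange A = (g ∘ₗ i).liftBaseChange A := by
    ext; simp
  rw [← (LinearMap.liftBaseChangeEquiv A).forall_congr_right]
  refine forall_congr' fun f => ?_
  rw [← (LinearMap.liftBaseChangeEquiv A).exists_congr_right]
  refine exists_congr fun g => ?_
  exact (iff_of_eq (congrArg (· = _) (hcomp g))).trans
    (LinearMap.liftBaseChangeEquiv A).injective.eq_iff

variable (hsurj : Function.Surjective (algebraMap S A))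
include hsurj

theorem surjective_of_isBaseChange {M M' : Type*} [AddCommGroup M] [Module S M]
    [AddCommGroup M'] [Module S M'] [Module A M'] [IsScalarTower S A M'] {v : M →ₗ[S] M'}
    (hv : IsBaseChange A v) : Function.Surjective v := by
  intro m'
  induction m' using hv.inductionOn with
  | zero => exact ⟨0, map_zero v⟩
  | tmul m => exact ⟨m, rfl⟩
  | smul a _ ih =>
    obtain ⟨m, rfl⟩ := ih
    obtain ⟨s, rfl⟩ := hsurj a
    exact ⟨s • m, by rw [map_smul, algebraMap_smul]⟩
  | add _ _ ih₁ ih₂ =>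
    obtain ⟨m₁, rfl⟩ := ih₁
    obtain ⟨m₂, rfl⟩ := ih₂
    exact ⟨m₁ + m₂, map_add v m₁ m₂⟩

variable {x : S} (hx : Function.Exact (LinearMap.lsmul S S x) (Algebra.linearMap S A))
include hx

theorem exact_lsmul_of_isBaseChange {M M' : Type*} [AddCommGroup M] [Module S M]
    [AddCommGroup M'] [Module S M'] [Module A M'] [IsScalarTower S A M'] {v : M →ₗ[S] M'}
    (hv : IsBaseChange A v) : Function.Exact (LinearMap.lsmul S M x) v := by
  refine (rTensor_exact M hx hsurj).of_ladder_linearEquiv_of_exact (e₁ := TensorProduct.lid S M)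
    (e₂ := TensorProduct.lid S M) (e₃ := hv.equiv.restrictScalars S) ?_ ?_
  · ext m
    simp
  · ext m
    simp [IsBaseChange.equiv_tmul]

-- Snake lemma for multiplication by `x`: the kernel of `K/xK → F/xF` is a quotient of the
-- `x`-torsion of `M`.
theorem injective_baseChange_of_isSMulRegular {K F M : Type*} [AddCommGroup K] [Module S K]
    [AddCommGroup F] [Module S F] [AddCommGroup M] [Module S M] {i : K →ₗ[S] F} {p : F →ₗ[S] M}
    (hi : Function.Injective i) (hip : Function.Exact i p)
    (hM : IsSMulRegular M x) : Function.Injective (i.baseChange A) := by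
  have hK := TensorProduct.isBaseChange S K A
  have hF := exact_lsmul_of_isBaseChange hsurj hx (TensorProduct.isBaseChange S F A)
  refine (injective_iff_map_eq_zero _).2 fun k' hk' => ?_
  obtain ⟨k, rfl⟩ := surjective_of_isBaseChange hsurj hK k'
  obtain ⟨f, hf : x • f = i k⟩ := (hF (i k)).1 hk'
  have hpf : p f = 0 := hM.right_eq_zero_of_smul (by rw [← map_smul, hf, hip.apply_apply_eq_zero])
  obtain ⟨l, rfl⟩ := (hip f).1 hpf
  rw [← map_smul] at hf
  exact (exact_lsmul_of_isBaseChange hsurj hx hK k).2 ⟨l, hi hf⟩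

end BaseChange

section Nakayama

variable {S : Type u} [CommRing S] {N N' : Type u} [AddCommGroup N] [Module S N]
  [AddCommGroup N'] [Module S N'] {x : S} {w : N →ₗ[S] N'}

theorem shortExact_lsmul_s6 (hN : IsSMulRegular N x)
    (hxw : Function.Exact (LinearMap.lsmul S N x) w) (hw : Function.Surjective w) :
    (ModuleCat.shortComplexOfCompEqZero (LinearMap.lsmul S N x) w
      hxw.linearMap_comp_eq_zero).ShortExact :=
  ModuleCat.shortComplex_shortExact _ hxw hN hw

theorem subsingleton_ext_of_exact_lsmul [IsNoetherianRing S]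
    (hxJ : x ∈ Ideal.jacobson (⊥ : Ideal S)) (M : ModuleCat.{u} S) [Module.Finite S M]
    [Module.Finite S N] (hN : IsSMulRegular N x)
    (hxw : Function.Exact (LinearMap.lsmul S N x) w) (hw : Function.Surjective w) {n : ℕ}
    (h : Subsingleton (Abelian.Ext M (ModuleCat.of S N') n)) :
    Subsingleton (Abelian.Ext M (ModuleCat.of S N) n) := by
  have hdiv (α : Abelian.Ext M (ModuleCat.of S N) n) : ∃ β, x • β = α := by
    obtain ⟨β, hβ⟩ := Abelian.Ext.covariant_sequence_exact₂ M (shortExact_lsmul_s6 hN hxw hw) α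
      (Subsingleton.elim _ _)
    exact ⟨β, by rw [Abelian.Ext.smul_eq_comp_mk₀, ← hβ]; rfl⟩
  rw [← Submodule.subsingleton_iff S, ← subsingleton_iff_bot_eq_top, eq_comm]
  refine Submodule.eq_bot_of_le_smul_of_le_jacobson_bot (Ideal.span {x}) _ Module.Finite.fg_top
    (fun α _ => ?_) ((Ideal.span_singleton_le_iff_mem _).2 hxJ)
  obtain ⟨β, rfl⟩ := hdiv α
  exact Submodule.smul_mem_smul (Ideal.mem_span_singleton_self x) Submodule.mem_top

end Nakayama

section ChangeOfRings

open scoped TensorProduct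

theorem forall_exists_ofHom_comp_eq_iff {R : Type*} [Ring R] {K F : Type u} [AddCommGroup K]
    [Module R K] [AddCommGroup F] [Module R F] (i : K →ₗ[R] F) (N : ModuleCat.{u} R) :
    (∀ f : ModuleCat.of R K ⟶ N, ∃ g : ModuleCat.of R F ⟶ N, ModuleCat.ofHom i ≫ g = f) ↔
      ∀ f : K →ₗ[R] N, ∃ g : F →ₗ[R] N, g ∘ₗ i = f := by
  refine ModuleCat.homEquiv.forall_congr fun f => ModuleCat.homEquiv.exists_congr fun g => ?_
  rw [ModuleCat.hom_ext_iff]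
  rfl

variable {S A : Type u} [CommRing S] [CommRing A] [Algebra S A]
  (hsurj : Function.Surjective (algebraMap S A)) {x : S}
  (hx : Function.Exact (LinearMap.lsmul S S x) (Algebra.linearMap S A))
include hsurj hx

theorem shortExact_baseChange {K F M M' : Type u} [AddCommGroup K] [Module S K]
    [AddCommGroup F] [Module S F] [AddCommGroup M] [Module S M] [AddCommGroup M'] [Module S M']
    [Module A M'] [IsScalarTower S A M'] {i : K →ₗ[S] F} {p : F →ₗ[S] M}
    (hi : Function.Injective i) (hip : Function.Exact i p) (hp : Function.Surjective p)
    (hM : IsSMulRegular M x) {v : M →ₗ[S] M'} (hv : IsBaseChange A v) :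
    ∃ h, (ModuleCat.shortComplexOfCompEqZero (i.baseChange A)
      (hv.equiv.toLinearMap ∘ₗ p.baseChange A) h).ShortExact := by
  have hexact : Function.Exact (i.baseChange A) (hv.equiv.toLinearMap ∘ₗ p.baseChange A) :=
    (lTensor_exact A hip hp).comp_injective hv.equiv hv.equiv.injective (map_zero _)
  exact ⟨hexact.linearMap_comp_eq_zero, ModuleCat.shortComplex_shortExact _ hexact
    (injective_baseChange_of_isSMulRegular hsurj hx hi hip hM)
    (hv.equiv.surjective.comp (p.baseChange_surjective A hp))⟩

theorem subsingleton_ext_iff_of_isBaseChange (hS : IsRegular x) {N : Type u} [AddCommGroup N]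
    [Module S N] [Module A N] [IsScalarTower S A N] {M M' : Type u} [AddCommGroup M]
    [Module S M] [AddCommGroup M'] [Module S M'] [Module A M'] [IsScalarTower S A M']
    (hM : IsSMulRegular M x) {v : M →ₗ[S] M'} (hv : IsBaseChange A v) (n : ℕ) :
    Subsingleton (Abelian.Ext (ModuleCat.of A M') (ModuleCat.of A N) (n + 1)) ↔
      Subsingleton (Abelian.Ext (ModuleCat.of S M) (ModuleCat.of S N) (n + 1)) := by
  let p : (M →₀ S) →ₗ[S] M := Finsupp.linearCombination S id
  have hp : Function.Surjective p := Finsupp.linearCombination_id_surjective S M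
  have hK : IsSMulRegular (LinearMap.ker p) x :=
    (Module.Flat.isSMulRegular_of_isRegular hS).submodule _ x
  have hSeq := LinearMap.shortExact_shortComplexKer hp
  obtain ⟨_, hSeq'⟩ := shortExact_baseChange hsurj hx (K := LinearMap.ker p)
    (LinearMap.ker p).subtype_injective p.exact_subtype_ker_map hp hM hv
  have : Projective p.shortComplexKer.X₂ := (IsProjective.iff_projective (M →₀ S)).1 inferInstance
  have : Projective (ModuleCat.of A (A ⊗[S] (M →₀ S))) :=
    (IsProjective.iff_projective _).1 inferInstance
  match n with
  | 0 =>
    have hExtS := (subsingleton_ext_X₃_one_iff hSeq (ModuleCat.of S N)).trans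
      (forall_exists_ofHom_comp_eq_iff _ _)
    have hExtA := (subsingleton_ext_X₃_one_iff hSeq' (ModuleCat.of A N)).trans
      (forall_exists_ofHom_comp_eq_iff _ _)
    exact hExtA.trans <|
      (forall_exists_comp_eq_baseChange_iff (K := LinearMap.ker p) _).trans hExtS.symm
  | n + 1 =>
    exact (subsingleton_ext_X₃_add_two_iff hSeq' _ n).trans <|
      (subsingleton_ext_iff_of_isBaseChange hS hK
        (TensorProduct.isBaseChange S (LinearMap.ker p) A) n).trans
      (subsingleton_ext_X₃_add_two_iff hSeq _ n).symm

variable (hS : IsRegular x) {M M' N N' : Type u} [AddCommGroup M] [Module S M] [AddCommGroup M']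
  [Module S M'] [Module A M'] [IsScalarTower S A M'] [AddCommGroup N] [Module S N]
  [AddCommGroup N'] [Module S N'] [Module A N'] [IsScalarTower S A N']
  (hM : IsSMulRegular M x) {v : M →ₗ[S] M'} (hv : IsBaseChange A v)
  (hN : IsSMulRegular N x) {w : N →ₗ[S] N'} (hw : IsBaseChange A w) {n : ℕ}
include hS hM hv hN hw

theorem subsingleton_ext_baseChange_of_succ
    (h₁ : Subsingleton (Abelian.Ext (ModuleCat.of S M) (ModuleCat.of S N) (n + 1)))
    (h₂ : Subsingleton (Abelian.Ext (ModuleCat.of S M) (ModuleCat.of S N) (n + 2))) :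
    Subsingleton (Abelian.Ext (ModuleCat.of A M') (ModuleCat.of A N') (n + 1)) :=
  (subsingleton_ext_iff_of_isBaseChange hsurj hx hS hM hv n).2 <|
    subsingleton_ext_X₃_of_X₂_of_X₁ (shortExact_lsmul_s6 hN
      (exact_lsmul_of_isBaseChange hsurj hx hw) (surjective_of_isBaseChange hsurj hw)) h₁ h₂

theorem subsingleton_ext_of_baseChange [IsNoetherianRing S] [Module.Finite S M]
    [Module.Finite S N] (hxJ : x ∈ Ideal.jacobson (⊥ : Ideal S))
    (h : Subsingleton (Abelian.Ext (ModuleCat.of A M') (ModuleCat.of A N') (n + 1))) :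
    Subsingleton (Abelian.Ext (ModuleCat.of S M) (ModuleCat.of S N) (n + 1)) :=
  subsingleton_ext_of_exact_lsmul hxJ _ hN (exact_lsmul_of_isBaseChange hsurj hx hw)
    (surjective_of_isBaseChange hsurj hw)
    ((subsingleton_ext_iff_of_isBaseChange hsurj hx hS hM hv n).1 h)

end ChangeOfRings

theorem subsingleton_ext_fin_pi {R : Type u} [Ring R] {M N : ModuleCat.{u} R} {n : ℕ}
    [Subsingleton (Abelian.Ext M N n)] (k : ℕ) :
    Subsingleton (Abelian.Ext M (ModuleCat.of R (Fin k → N)) n) :=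
  (((Abelian.extFunctorObj M n).mapIso
      (ModuleCat.biproductIsoPi fun _ : Fin k => N).symm).addCommGroupIsoToAddEquiv.trans
    (Abelian.Ext.addEquivBiproduct M (Limits.biproduct.isBilimit _) n)).subsingleton

section SymmetricAuslander

/-- The symmetric Auslander condition on a single module `M`, in terms of Mathlib's `Abelian.Ext`.
Indices are shifted by one, so that `i = n + 1` runs over the positive degrees. -/
def SymmetricAuslander {A : Type u} [CommRing A] (M : ModuleCat.{u} A) : Prop :=
  (∀ n, Subsingleton (Abelian.Ext M (ModuleCat.of A A) (n + 1))) →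
    (∃ m, ∀ n ≥ m, Subsingleton (Abelian.Ext M M (n + 1))) →
    ∀ n, Subsingleton (Abelian.Ext M M (n + 1))

theorem sac_iff_forall_symmetricAuslander (R : Type) [CommRing R] :
    SAC R ↔ ∀ M : ModuleCat.{0} R, Module.Finite R M → SymmetricAuslander M := by
  have hpos {p : ℕ → Prop} : (∀ i, 0 < i → p i) ↔ ∀ n, p (n + 1) :=
    ⟨fun h n => h _ n.succ_pos, fun h i hi => Nat.succ_pred_eq_of_pos hi ▸ h i.pred⟩
  have hlarge {p : ℕ → Prop} : (∃ N, ∀ i, N < i → p i) ↔ ∃ m, ∀ n ≥ m, p (n + 1) :=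
    ⟨fun ⟨N, h⟩ => ⟨N, fun n hn => h _ (Nat.lt_succ_of_le hn)⟩,
      fun ⟨m, h⟩ => ⟨m, fun i hi => Nat.succ_pred_eq_of_pos (Nat.zero_lt_of_lt hi) ▸
        h i.pred (Nat.le_pred_of_lt hi)⟩⟩
  simp only [SAC, SymmetricAuslander, hpos, hlarge, ExtGroup,
    subsingleton_ext_succ_iff_subsingleton_abelianExt]

theorem symmetricAuslander_of_shortExact {A : Type u} [CommRing A]
    {T : ShortComplex (ModuleCat.{u} A)} (hT : T.ShortExact) [Projective T.X₂]
    (h₂ : ∀ n, Subsingleton (Abelian.Ext T.X₃ (ModuleCat.of A A) n) →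
      Subsingleton (Abelian.Ext T.X₃ T.X₂ n))
    (h : SymmetricAuslander T.X₁) : SymmetricAuslander T.X₃ := by
  rintro hA ⟨m, hm⟩ n
  have hX₂ (n : ℕ) : Subsingleton (Abelian.Ext T.X₃ T.X₂ (n + 1)) := h₂ _ (hA n)
  have hX₁ : ∀ n, Subsingleton (Abelian.Ext T.X₁ T.X₁ (n + 1)) := by
    refine h (fun n => (subsingleton_ext_X₃_add_two_iff hT _ n).1 (hA (n + 1))) ⟨m, fun n hn => ?_⟩
    exact (subsingleton_ext_X₃_add_two_iff hT _ n).1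
      (subsingleton_ext_X₁_of_X₃_of_X₂ hT (hm n hn) (hX₂ (n + 1)))
  exact subsingleton_ext_X₃_of_X₂_of_X₁ hT (hX₂ n)
    ((subsingleton_ext_X₃_add_two_iff hT _ n).2 (hX₁ n))

variable {S A : Type u} [CommRing S] [IsNoetherianRing S] [CommRing A] [Algebra S A] {x : S}
  (hsurj : Function.Surjective (algebraMap S A))
  (hx : Function.Exact (LinearMap.lsmul S S x) (Algebra.linearMap S A))
  (hS : IsRegular x) (hxJ : x ∈ Ideal.jacobson (⊥ : Ideal S))
include hsurj hx hS hxJ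

theorem symmetricAuslander_iff_of_isBaseChange {M M' : Type u} [AddCommGroup M] [Module S M]
    [Module.Finite S M] [AddCommGroup M'] [Module S M'] [Module A M'] [IsScalarTower S A M']
    (hM : IsSMulRegular M x) {v : M →ₗ[S] M'} (hv : IsBaseChange A v) :
    SymmetricAuslander (ModuleCat.of S M) ↔ SymmetricAuslander (ModuleCat.of A M') := by
  have hSx : IsSMulRegular S x := hS.left.isSMulRegular
  have hA := IsBaseChange.linearMap S A
  constructor
  · rintro h hMA ⟨m, hm⟩ n
    have hself := h
      (fun n => subsingleton_ext_of_baseChange hsurj hx hS hM hv hSx hA hxJ (hMA n))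
      ⟨m, fun n hn => subsingleton_ext_of_baseChange hsurj hx hS hM hv hM hv hxJ (hm n hn)⟩
    exact subsingleton_ext_baseChange_of_succ hsurj hx hS hM hv hM hv (hself n) (hself (n + 1))
  · rintro h hMS ⟨m, hm⟩ n
    have hself := h
      (fun n => subsingleton_ext_baseChange_of_succ hsurj hx hS hM hv hSx hA (hMS n) (hMS (n + 1)))
      ⟨m, fun n hn => subsingleton_ext_baseChange_of_succ hsurj hx hS hM hv hM hv (hm n hn)
        (hm (n + 1) (Nat.le_succ_of_le hn))⟩
    exact subsingleton_ext_of_baseChange hsurj hx hS hM hv hM hv hxJ (hself n)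

theorem forall_symmetricAuslander_of_surjective
    (h : ∀ M : ModuleCat.{u} A, Module.Finite A M → SymmetricAuslander M)
    (M : ModuleCat.{u} S) [Module.Finite S M] : SymmetricAuslander M := by
  obtain ⟨k, p, hp⟩ := Module.Finite.exists_fin' S M
  have hreg : IsSMulRegular (LinearMap.ker p) x :=
    (Module.Flat.isSMulRegular_of_isRegular hS).submodule _ x
  have : Projective p.shortComplexKer.X₂ :=
    (IsProjective.iff_projective (Fin k → S)).1 inferInstance
  refine symmetricAuslander_of_shortExact (LinearMap.shortExact_shortComplexKer hp)
    (fun _ _ => subsingleton_ext_fin_pi (N := ModuleCat.of S S) k) ?_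
  exact (symmetricAuslander_iff_of_isBaseChange (M := LinearMap.ker p) hsurj hx hS hxJ hreg
    (TensorProduct.isBaseChange S (LinearMap.ker p) A)).2 (h _ inferInstance)

theorem forall_symmetricAuslander_of_retract [Algebra A S] [IsScalarTower A S A]
    (h : ∀ M : ModuleCat.{u} S, Module.Finite S M → SymmetricAuslander M)
    (M : ModuleCat.{u} A) [Module.Finite A M] : SymmetricAuslander M := by
  let _ : Module S M := Module.compHom M (algebraMap S A)
  have : IsScalarTower S A M := .of_compHom S A M
  have : IsScalarTower A S M := .of_algebraMap_smul fun a m => by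
    change algebraMap S A (algebraMap A S a) • m = a • m
    rw [← IsScalarTower.algebraMap_apply, Algebra.algebraMap_self_apply]
  have hv : IsBaseChange A (LinearMap.liftBaseChange S (LinearMap.id : M →ₗ[A] M)) := by
    refine (TensorProduct.isBaseChange A M S).of_comp ?_
    convert IsBaseChange.ofEquiv (LinearEquiv.refl A M)
    ext
    simp
  exact (symmetricAuslander_iff_of_isBaseChange hsurj hx hS hxJ
    (isSMulRegular_tensorProduct_of_exact hsurj hx hS M) hv).1 (h _ inferInstance)

end SymmetricAuslander

open PowerSeries in
theorem stmt_6_general (R : Type) [CommRing R] [IsNoetherianRing R] :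
    SAC R ↔ SAC (PowerSeries R) := by
  let _ : Algebra R⟦X⟧ R := (constantCoeff (R := R)).toAlgebra
  have : IsScalarTower R R⟦X⟧ R := .of_algebraMap_eq fun r => (constantCoeff_C r).symm
  have hx : Function.Exact (LinearMap.lsmul R⟦X⟧ R⟦X⟧ (X : R⟦X⟧)) (Algebra.linearMap R⟦X⟧ R) :=
    fun f => X_dvd_iff.symm.trans ⟨fun ⟨g, hg⟩ => ⟨g, hg.symm⟩, fun ⟨g, hg⟩ => ⟨g, hg.symm⟩⟩
  have hX : IsRegular (X : R⟦X⟧) := isLeftRegular_iff_isRegular.1 X_mul_injective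
  have hxJ : (X : R⟦X⟧) ∈ Ideal.jacobson (⊥ : Ideal R⟦X⟧) :=
    Ideal.mem_jacobson_bot.2 fun f => isUnit_iff_constantCoeff.2 (by simp)
  rw [sac_iff_forall_symmetricAuslander, sac_iff_forall_symmetricAuslander]
  exact ⟨fun h M _ => forall_symmetricAuslander_of_surjective constantCoeff_surj hx hX hxJ h M,
    fun h M _ => forall_symmetricAuslander_of_retract constantCoeff_surj hx hX hxJ h M⟩

/-- A Noetherian local ring `R` satisfies (SAC) iff the power series ring `R[[T]]`
satisfies (SAC). -/
theorem stmt_6 (R : Type) [CommRing R] [IsNoetherianRing R] [IsLocalRing R] :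
    SAC R ↔ SAC (PowerSeries R) :=
  stmt_6_general R
end

section
/- Let R → S be a local homomorphism of Noetherian local rings with the flat dimension of S as an R-module finite. If S satisfies (SAC), then R satisfies (SAC). -/
open CategoryTheory

/-- `FlatDimLE R n M`: `M` admits a resolution of length at most `n` by flat `R`-modules. -/
inductive FlatDimLE (R : Type) [CommRing R] : ℕ → ModuleCat.{0} R → Prop
  | zero (M : ModuleCat.{0} R) (h : Module.Flat R M) : FlatDimLE R 0 M
  | succ {n : ℕ} {K F M : ModuleCat.{0} R} (hflat : Module.Flat R F)
      (f : K →ₗ[R] F) (g : F →ₗ[R] M)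
      (hf : Function.Injective f) (hg : Function.Surjective g)
      (hfg : LinearMap.range f = LinearMap.ker g)
      (hK : FlatDimLE R n K) : FlatDimLE R (n + 1) M

/-!
Let `S` have flat dimension at most `n` over `R`. Replacing `M` by an `n`-th syzygy changes
neither the hypotheses nor the conclusion of (SAC), because `Ext^{>0}(M, R) = 0`; after this
replacement `Tor_{>0}(S, M) = 0`. A flat resolution of `S` then shows that vanishing of
`Ext_R^{>t}(M, N)`, for `N = R` or `N = M`, passes to `S ⊗ N`, and
`Ext_R(M, S ⊗ N) = Ext_S(S ⊗ M, S ⊗ N)`, so that `S ⊗ M` satisfies the hypotheses of (SAC) over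
`S`. Conversely, if `k > 0` is the last degree in which `Ext_R(M, M)` may be nonzero, then
`S ⊗ Ext^k(M, M) = Ext^k(M, S ⊗ M)`, which vanishes by (SAC) for `S`, and Nakayama's lemma gives
`Ext^k(M, M) = 0`.
-/

universe u v

section Comparison

variable {R : Type} [CommRing R]

lemma subsingleton_extGroup_iff_forall_cocycle {M : ModuleCat.{0} R} (P : ProjectiveResolution M)
    (N : ModuleCat.{0} R) (k : ℕ) :
    Subsingleton (ExtGroup R M N (k + 1)) ↔
      ∀ f : P.complex.X (k + 1) ⟶ N, P.complex.d (k + 2) (k + 1) ≫ f = 0 →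
        ∃ g : P.complex.X k ⟶ N, P.complex.d (k + 1) k ≫ g = f := by
  rw [← ModuleCat.isZero_iff_subsingleton, (P.isoExt (R := R) (k + 1) N).isZero_iff,
    ← HomologicalComplex.exactAt_iff_isZero_homology,
    HomologicalComplex.exactAt_iff' _ k (k + 1) (k + 2) (by simp) (by simp),
    ShortComplex.moduleCat_exact_iff]
  rfl

lemma subsingleton_ext_iff_forall_cocycle {C : Type*} [Category* C] [Abelian C] [HasExt C]
    {X : C} (P : ProjectiveResolution X) (Y : C) (k : ℕ) :
    Subsingleton (Abelian.Ext X Y (k + 1)) ↔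
      ∀ f : P.complex.X (k + 1) ⟶ Y, P.complex.d (k + 2) (k + 1) ≫ f = 0 →
        ∃ g : P.complex.X k ⟶ Y, P.complex.d (k + 1) k ≫ g = f := by
  refine ⟨fun _ f hf ↦ ?_, fun h ↦ subsingleton_of_forall_eq 0 fun e ↦ ?_⟩
  · exact (P.extMk_eq_zero_iff f (k + 2) rfl hf k rfl).mp (Subsingleton.elim _ _)
  · obtain ⟨f, hf, rfl⟩ := P.extMk_surjective e (k + 2) rfl
    exact (P.extMk_eq_zero_iff f (k + 2) rfl hf k rfl).mpr (h f hf)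

lemma subsingleton_extGroup_iff (M N : ModuleCat.{0} R) {k : ℕ} (hk : 0 < k) :
    Subsingleton (ExtGroup R M N k) ↔ Subsingleton (Abelian.Ext M N k) := by
  obtain ⟨k, rfl⟩ := Nat.exists_eq_succ_of_ne_zero hk.ne'
  rw [subsingleton_extGroup_iff_forall_cocycle (ProjectiveResolution.of M),
    subsingleton_ext_iff_forall_cocycle (ProjectiveResolution.of M)]

end Comparison

section LongExactSequences

variable {C : Type*} [Category* C] [Abelian C] [HasExt C] {S : ShortComplex C}

lemma subsingleton_ext_X₃ (hS : S.ShortExact) (X : C) (k : ℕ)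
    (h₂ : Subsingleton (Abelian.Ext X S.X₂ k)) (h₁ : Subsingleton (Abelian.Ext X S.X₁ (k + 1))) :
    Subsingleton (Abelian.Ext X S.X₃ k) := by
  refine subsingleton_of_forall_eq 0 fun e ↦ ?_
  obtain ⟨e', rfl⟩ := Abelian.Ext.covariant_sequence_exact₃ X hS e rfl (Subsingleton.elim _ _)
  rw [Subsingleton.elim e' 0, Abelian.Ext.zero_comp]

lemma subsingleton_ext_X₁ (hS : S.ShortExact) (X : C) (k : ℕ)
    (h₃ : Subsingleton (Abelian.Ext X S.X₃ k)) (h₂ : Subsingleton (Abelian.Ext X S.X₂ (k + 1))) :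
    Subsingleton (Abelian.Ext X S.X₁ (k + 1)) := by
  refine subsingleton_of_forall_eq 0 fun e ↦ ?_
  obtain ⟨e', rfl⟩ := Abelian.Ext.covariant_sequence_exact₁ X hS e (Subsingleton.elim _ _) rfl
  rw [Subsingleton.elim e' 0, Abelian.Ext.zero_comp]

lemma exists_comp_eq_of_subsingleton_ext_one (hS : S.ShortExact) {X : C}
    (h : Subsingleton (Abelian.Ext X S.X₁ 1)) (f : X ⟶ S.X₃) : ∃ g : X ⟶ S.X₂, g ≫ S.g = f := by
  obtain ⟨e, he⟩ := Abelian.Ext.covariant_sequence_exact₃ X hS (.mk₀ f) (zero_add 1)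
    (Subsingleton.elim _ _)
  obtain ⟨g, rfl⟩ := (Abelian.Ext.mk₀_bijective _ _).2 e
  exact ⟨g, (Abelian.Ext.mk₀_bijective _ _).1 (by rwa [← Abelian.Ext.mk₀_comp_mk₀])⟩

lemma subsingleton_ext_X₁_iff (hS : S.ShortExact) [Projective S.X₂] (Y : C) {k : ℕ}
    (hk : 0 < k) :
    Subsingleton (Abelian.Ext S.X₁ Y k) ↔ Subsingleton (Abelian.Ext S.X₃ Y (k + 1)) := by
  obtain ⟨k, rfl⟩ := Nat.exists_eq_succ_of_ne_zero hk.ne'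
  refine ⟨fun _ ↦ subsingleton_of_forall_eq 0 fun e ↦ ?_,
    fun _ ↦ subsingleton_of_forall_eq 0 fun e ↦ ?_⟩
  · obtain ⟨e', rfl⟩ := Abelian.Ext.contravariant_sequence_exact₃ hS Y e
      (Abelian.Ext.eq_zero_of_projective _) (add_comm 1 (k + 1))
    rw [Subsingleton.elim e' 0, Abelian.Ext.comp_zero]
  · obtain ⟨e', rfl⟩ := Abelian.Ext.contravariant_sequence_exact₁ hS Y e (add_comm 1 (k + 1))
      (Subsingleton.elim _ _)
    rw [Abelian.Ext.eq_zero_of_projective e', Abelian.Ext.comp_zero]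

lemma subsingleton_ext_one_iff (hS : S.ShortExact) [Projective S.X₂] (Y : C) :
    Subsingleton (Abelian.Ext S.X₃ Y 1) ↔ ∀ f : S.X₁ ⟶ Y, ∃ g : S.X₂ ⟶ Y, S.f ≫ g = f := by
  refine ⟨fun _ f ↦ ?_, fun h ↦ subsingleton_of_forall_eq 0 fun e ↦ ?_⟩
  · obtain ⟨e, he⟩ := Abelian.Ext.contravariant_sequence_exact₁ hS Y (.mk₀ f) rfl
      (Subsingleton.elim _ _)
    obtain ⟨g, rfl⟩ := (Abelian.Ext.mk₀_bijective _ _).2 e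
    exact ⟨g, (Abelian.Ext.mk₀_bijective _ _).1 (by rwa [← Abelian.Ext.mk₀_comp_mk₀])⟩
  · obtain ⟨e', rfl⟩ := Abelian.Ext.contravariant_sequence_exact₃ hS Y e
      (Abelian.Ext.eq_zero_of_projective _) (add_zero 1)
    obtain ⟨f, rfl⟩ := (Abelian.Ext.mk₀_bijective _ _).2 e'
    obtain ⟨g, rfl⟩ := h f
    rw [← Abelian.Ext.mk₀_comp_mk₀]
    exact hS.extClass_comp_assoc _

end LongExactSequences

section HomTensor

open TensorProduct LinearMap

variable {R : Type*} [CommRing R] {M M' N T T' : Type*} [AddCommGroup M] [Module R M]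
  [AddCommGroup M'] [Module R M'] [AddCommGroup N] [Module R N] [AddCommGroup T] [Module R T]
  [AddCommGroup T'] [Module R T']

lemma lTensorHomToHomLTensor_comp_lTensor_lcomp (f : M →ₗ[R] M') :
    lTensorHomToHomLTensor (.id R) M T N ∘ₗ (f.lcomp R N).lTensor T =
      f.lcomp R (T ⊗[R] N) ∘ₗ lTensorHomToHomLTensor (.id R) M' T N := by
  ext; simp

lemma lTensorHomToHomLTensor_comp_rTensor (g : T →ₗ[R] T') :
    lTensorHomToHomLTensor (.id R) M T' N ∘ₗ g.rTensor (M →ₗ[R] N) =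
      (g.rTensor N).compRight R ∘ₗ lTensorHomToHomLTensor (.id R) M T N := by
  ext; simp

lemma bijective_lTensorHomToHomLTensor_of_projective [Module.Finite R M] [Module.Projective R M] :
    Function.Bijective (lTensorHomToHomLTensor (.id R) M T N) := by
  simpa [← lTensorHomEquivHomLTensor_toLinearMap] using
    (lTensorHomEquivHomLTensor R M T N).bijective

lemma bijective_lTensorHomToHomLTensor_of_flat [Module.Flat R T] [Module.FinitePresentation R M] :
    Function.Bijective (lTensorHomToHomLTensor (.id R) M T N) := by
  obtain ⟨_, _, f, g, hf, hfg⟩ := Module.FinitePresentation.exists_fin' R M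
  exact bijective_of_bijective_of_injective_of_left_exact _ _ (f.lcomp R _) (g.lcomp R _) _ _ _
    (lTensorHomToHomLTensor_comp_lTensor_lcomp f).symm
    (lTensorHomToHomLTensor_comp_lTensor_lcomp g).symm
    (Module.Flat.lTensor_exact T (exact_lcomp_of_exact_of_surjective N hfg hf))
    (exact_lcomp_of_exact_of_surjective _ hfg hf)
    bijective_lTensorHomToHomLTensor_of_projective
    bijective_lTensorHomToHomLTensor_of_projective.injective
    (Module.Flat.lTensor_preserves_injective_linearMap _ (lcomp_injective_of_surjective f hf))
    (lcomp_injective_of_surjective f hf)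

end HomTensor

section Syzygies

/-- `IsSyzygy R n N` means that `N` is an `n`-th syzygy in the flat sense: there is an exact
sequence `0 → N → Fₙ₋₁ → ⋯ → F₀` with all `Fᵢ` flat. Tensoring such a module with one of flat
dimension at most `n` creates no higher `Tor`. -/
inductive IsSyzygy (R : Type*) [CommRing R] : ℕ → ModuleCat R → Prop
  | zero (N : ModuleCat R) : IsSyzygy R 0 N
  | succ {n : ℕ} {S : ShortComplex (ModuleCat R)} (hS : S.ShortExact) (hflat : Module.Flat R S.X₂)
      (h : IsSyzygy R n S.X₃) : IsSyzygy R (n + 1) S.X₁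

lemma IsSyzygy.of_succ {R : Type*} [CommRing R] {n : ℕ} {N : ModuleCat R}
    (h : IsSyzygy R (n + 1) N) : IsSyzygy R n N := by
  induction n generalizing N with
  | zero => exact .zero N
  | succ n ih =>
    cases h with
    | succ hS hflat h => exact .succ hS hflat (ih h)

lemma IsSyzygy.of_flat {R : Type*} [CommRing R] (n : ℕ) (N : ModuleCat R) [Module.Flat R N] :
    IsSyzygy R n N := by
  induction n generalizing N with
  | zero => exact .zero N
  | succ n ih =>
    have hN : (ShortComplex.mk (𝟙 N) (0 : N ⟶ ModuleCat.of R PUnit) (by simp)).ShortExact :=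
      ModuleCat.shortComplex_shortExact _ (by simp [Function.Exact]) Function.injective_id
        (fun _ ↦ ⟨0, rfl⟩)
    exact .succ hN ‹_› (ih _)

@[elab_as_elim]
lemma FlatDimLE.induction_shortExact {R : Type} [CommRing R]
    {motive : ∀ (n : ℕ) (T : ModuleCat.{0} R), FlatDimLE R n T → Prop}
    (zero : ∀ (T : ModuleCat.{0} R) (hflat : Module.Flat R T), motive 0 T (.zero T hflat))
    (succ : ∀ (n : ℕ) (S : ShortComplex (ModuleCat.{0} R)) (hS : S.ShortExact)
      (hflat : Module.Flat R S.X₂) (h : FlatDimLE R n S.X₁), motive n S.X₁ h →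
      motive (n + 1) S.X₃ (.succ hflat S.f.hom S.g.hom hS.moduleCat_injective_f
        hS.moduleCat_surjective_g hS.exact.moduleCat_range_eq_ker h))
    {n : ℕ} {T : ModuleCat.{0} R} (hT : FlatDimLE R n T) : motive n T hT := by
  induction hT with
  | zero T hflat => exact zero T hflat
  | succ hflat f g hf hg hfg hK ih =>
    have hexact : Function.Exact f g := LinearMap.exact_iff.mpr hfg.symm
    exact succ _ (ModuleCat.shortComplexOfCompEqZero f g hexact.linearMap_comp_eq_zero)
      (ModuleCat.shortComplex_shortExact _ hexact hf hg) hflat hK ih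

lemma function_exact_of_shortExact {R : Type*} [Ring R]
    {S : ShortComplex (ModuleCat R)} (hS : S.ShortExact) : Function.Exact S.f S.g :=
  (ShortComplex.ShortExact.moduleCat_exact_iff_function_exact S).mp hS.exact

lemma rTensor_injective_of_isSyzygy_succ {R : Type*} [CommRing R]
    {S : ShortComplex (ModuleCat.{v} R)} (hS : S.ShortExact) {n : ℕ} {N : ModuleCat.{v} R}
    (hN : IsSyzygy R (n + 1) N)
    (hX₁ : ∀ S' : ShortComplex (ModuleCat.{v} R), S'.ShortExact → IsSyzygy R n S'.X₃ →
      Function.Injective (S'.f.hom.lTensor S.X₁)) :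
    Function.Injective (S.f.hom.rTensor N) := by
  cases hN with
  | @succ _ S' hS' _ hN =>
    refine Function.Injective.of_comp (f := S'.f.hom.lTensor S.X₂) ?_
    rw [← LinearMap.coe_comp, LinearMap.lTensor_comp_rTensor, ← LinearMap.rTensor_comp_lTensor,
      LinearMap.coe_comp]
    exact (Module.Flat.rTensor_preserves_injective_linearMap _ hS.moduleCat_injective_f).comp
      (hX₁ S' hS' hN)

variable {R : Type} [CommRing R] {n : ℕ} {T : ModuleCat.{0} R} {S : ShortComplex (ModuleCat.{0} R)}

lemma FlatDimLE.lTensor_injective (hT : FlatDimLE R n T) (hS : S.ShortExact)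
    (hN : IsSyzygy R n S.X₃) : Function.Injective (S.f.hom.lTensor T) := by
  induction hT using FlatDimLE.induction_shortExact generalizing S with
  | zero T hflat =>
    exact Module.Flat.lTensor_preserves_injective_linearMap _ hS.moduleCat_injective_f
  | succ n S' hS' hflat _ ih =>
    exact lTensor_injective_of_exact_of_exact_of_rTensor_injective
      (function_exact_of_shortExact hS')
      hS'.moduleCat_surjective_g (function_exact_of_shortExact hS) hS.moduleCat_surjective_g
      (rTensor_injective_of_isSyzygy_succ hS' hN fun _ ↦ ih)
      (Module.Flat.lTensor_preserves_injective_linearMap _ hS.moduleCat_injective_f)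

open MonoidalCategory in
lemma FlatDimLE.shortExact_map_tensorRight (hX₁ : FlatDimLE R n S.X₁)
    (hS : S.ShortExact) {N : ModuleCat.{0} R} (hN : IsSyzygy R (n + 1) N) :
    (S.map (tensorRight N)).ShortExact :=
  ModuleCat.shortComplex_shortExact _
    (rTensor_exact N (function_exact_of_shortExact hS) hS.moduleCat_surjective_g)
    (rTensor_injective_of_isSyzygy_succ hS hN fun _ hS' ↦ hX₁.lTensor_injective hS')
    (LinearMap.rTensor_surjective N hS.moduleCat_surjective_g)

end Syzygies

section ExtTensor

open MonoidalCategory TensorProduct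

section

variable {R : Type u} [CommRing R]

lemma subsingleton_ext_one_iff_surjective_lcomp [Small.{v} R] {S : ShortComplex (ModuleCat.{v} R)}
    (hS : S.ShortExact) [Projective S.X₂] (Y : ModuleCat.{v} R) :
    Subsingleton (Abelian.Ext S.X₃ Y 1) ↔ Function.Surjective (S.f.hom.lcomp R Y) := by
  rw [subsingleton_ext_one_iff hS]
  refine ⟨fun h f ↦ ?_, fun h f ↦ ?_⟩
  · obtain ⟨g, hg⟩ := h (ModuleCat.ofHom f)
    exact ⟨g.hom, congrArg ModuleCat.Hom.hom hg⟩
  · obtain ⟨g, hg⟩ := h f.hom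
    exact ⟨ModuleCat.ofHom g, ModuleCat.hom_ext hg⟩

lemma exact_compRight {S : ShortComplex (ModuleCat.{v} R)} (hS : S.ShortExact)
    (X : ModuleCat.{v} R) :
    Function.Exact (S.f.hom.compRight R (M := X)) (S.g.hom.compRight R (M := X)) := by
  have := hS.mono_f
  refine fun k ↦ ⟨fun hk ↦ ?_, ?_⟩
  · exact ⟨(hS.exact.lift (ModuleCat.ofHom k) (ModuleCat.hom_ext hk)).hom,
      congrArg ModuleCat.Hom.hom (hS.exact.lift_f _ _)⟩
  · rintro ⟨k, rfl⟩
    exact LinearMap.ext fun x ↦ S.moduleCat_zero_apply (k x)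

lemma surjective_compRight_of_subsingleton_ext_one [Small.{v} R]
    {S : ShortComplex (ModuleCat.{v} R)} (hS : S.ShortExact) {X : ModuleCat.{v} R}
    (h : Subsingleton (Abelian.Ext X S.X₁ 1)) :
    Function.Surjective (S.g.hom.compRight R (M := X)) := by
  intro f
  obtain ⟨g, hg⟩ := exists_comp_eq_of_subsingleton_ext_one hS h (ModuleCat.ofHom f)
  exact ⟨g.hom, congrArg ModuleCat.Hom.hom hg⟩

variable [IsNoetherianRing R]

lemma exists_shortExact_finite_projective [Small.{v} R] (M : ModuleCat.{v} R) [Module.Finite R M] :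
    ∃ S : ShortComplex (ModuleCat.{v} R), S.ShortExact ∧ Projective S.X₂ ∧
      Module.Projective R S.X₂ ∧ Module.Finite R S.X₁ ∧ Module.Finite R S.X₂ ∧ S.X₃ = M := by
  obtain ⟨P, _, _, _, _, f, hf⟩ := Module.exists_finite_presentation R M
  exact ⟨f.shortComplexKer, LinearMap.shortExact_shortComplexKer hf, inferInstance, inferInstance,
    inferInstance, inferInstance, rfl⟩

lemma subsingleton_ext_tensor_of_flat (M N T : ModuleCat.{u} R) [Module.Finite R M]
    [Module.Flat R T] {k : ℕ} (hk : 0 < k) (h : Subsingleton (Abelian.Ext M N k)) :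
    Subsingleton (Abelian.Ext M (T ⊗ N) k) := by
  induction k, hk using Nat.le_induction generalizing M with
  | base =>
    obtain ⟨S, hS, _, _, _, _, rfl⟩ := exists_shortExact_finite_projective M
    have := Module.finitePresentation_of_finite R S.X₁
    rw [subsingleton_ext_one_iff_surjective_lcomp hS] at h ⊢
    have hcomp : Function.Surjective
        (lTensorHomToHomLTensor (.id R) S.X₁ T N ∘ₗ (S.f.hom.lcomp R N).lTensor T) :=
      bijective_lTensorHomToHomLTensor_of_flat.surjective.comp (LinearMap.lTensor_surjective T h)
    rw [lTensorHomToHomLTensor_comp_lTensor_lcomp] at hcomp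
    exact Function.Surjective.of_comp hcomp
  | succ k hk ih =>
    obtain ⟨S, hS, _, _, _, _, rfl⟩ := exists_shortExact_finite_projective M
    rw [← subsingleton_ext_X₁_iff hS _ hk] at h ⊢
    exact ih S.X₁ h

end

variable {R : Type} [CommRing R] [IsNoetherianRing R]

lemma FlatDimLE.subsingleton_ext_tensor {M N T : ModuleCat.{0} R} [Module.Finite R M] {n t : ℕ}
    (hT : FlatDimLE R n T) (hN : IsSyzygy R n N)
    (h : ∀ k, t < k → Subsingleton (Abelian.Ext M N k)) :
    ∀ k, t < k → Subsingleton (Abelian.Ext M (T ⊗ N) k) := by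
  induction hT using FlatDimLE.induction_shortExact with
  | zero T hflat =>
    exact fun k hk ↦ subsingleton_ext_tensor_of_flat M N T (by lia) (h k hk)
  | succ n S hS hflat hX₁ ih =>
    intro k hk
    exact subsingleton_ext_X₃ (hX₁.shortExact_map_tensorRight hS hN) M k
      (subsingleton_ext_tensor_of_flat M N S.X₂ (by lia) (h k hk))
      (ih hN.of_succ (k + 1) (by lia))

lemma FlatDimLE.bijective_lTensorHomToHomLTensor {M N T : ModuleCat.{0} R} [Module.Finite R M]
    {n : ℕ} (hT : FlatDimLE R n T) (hN : IsSyzygy R n N)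
    (h : ∀ k, 0 < k → Subsingleton (Abelian.Ext M N k)) :
    Function.Bijective (lTensorHomToHomLTensor (.id R) M T N) := by
  induction hT using FlatDimLE.induction_shortExact with
  | zero T hflat =>
    have := Module.finitePresentation_of_finite R M
    exact bijective_lTensorHomToHomLTensor_of_flat
  | succ n S hS hflat hX₁ ih =>
    have := Module.finitePresentation_of_finite R M
    have hSN := hX₁.shortExact_map_tensorRight hS hN
    have hExt := hX₁.subsingleton_ext_tensor hN.of_succ h 1 one_pos
    exact LinearMap.bijective_of_surjective_of_bijective_of_right_exact
      (S.f.hom.rTensor (M →ₗ[R] N)) (S.g.hom.rTensor (M →ₗ[R] N))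
      ((S.f.hom.rTensor N).compRight R) ((S.g.hom.rTensor N).compRight R) _ _ _
      (lTensorHomToHomLTensor_comp_rTensor S.f.hom).symm
      (lTensorHomToHomLTensor_comp_rTensor S.g.hom).symm
      (rTensor_exact _ (function_exact_of_shortExact hS) hS.moduleCat_surjective_g)
      (exact_compRight hSN M)
      (ih hN.of_succ).surjective bijective_lTensorHomToHomLTensor_of_flat
      (LinearMap.rTensor_surjective _ hS.moduleCat_surjective_g)
      (surjective_compRight_of_subsingleton_ext_one hSN hExt)

end ExtTensor

section BaseChange

open TensorProduct

variable {R A : Type} [CommRing R] [CommRing A] [Algebra R A] {n : ℕ}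

lemma surjective_lcomp_baseChange_iff {K P : Type*} [AddCommGroup K] [Module R K] [AddCommGroup P]
    [Module R P] (f : K →ₗ[R] P) (L : Type*) [AddCommGroup L] [Module R L] [Module A L]
    [IsScalarTower R A L] :
    Function.Surjective ((f.baseChange A).lcomp A L) ↔ Function.Surjective (f.lcomp R L) := by
  have hcomp : (f.baseChange A).lcomp A L ∘ LinearMap.liftBaseChangeEquiv A =
      LinearMap.liftBaseChangeEquiv A ∘ f.lcomp R L := by
    ext; simp
  rw [← EquivLike.surjective_comp (LinearMap.liftBaseChangeEquiv A), hcomp,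
    EquivLike.comp_surjective]

/-- Base change `A ⊗[R] S` of a short complex `S` of `R`-modules, as a short complex of
`A`-modules. Its maps are `LinearMap.baseChange`, so that results about the latter apply
definitionally. -/
noncomputable abbrev baseChangeShortComplex (A : Type*) {R : Type*} [CommRing R] [CommRing A]
    [Algebra R A] (S : ShortComplex (ModuleCat R)) : ShortComplex (ModuleCat A) :=
  ModuleCat.shortComplexOfCompEqZero (S.f.hom.baseChange A) (S.g.hom.baseChange A) (by
    rw [← LinearMap.baseChange_comp, ← ModuleCat.hom_comp, S.zero]; simp)

lemma FlatDimLE.shortExact_baseChange (hA : FlatDimLE R n (.of R A))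
    {S : ShortComplex (ModuleCat.{0} R)} (hS : S.ShortExact) (hX₃ : IsSyzygy R n S.X₃) :
    (baseChangeShortComplex A S).ShortExact :=
  ModuleCat.shortComplex_shortExact _
    (lTensor_exact A (function_exact_of_shortExact hS) hS.moduleCat_surjective_g)
    (hA.lTensor_injective hS hX₃)
    (LinearMap.lTensor_surjective A hS.moduleCat_surjective_g)

lemma FlatDimLE.exists_shortExact_baseChange (hA : FlatDimLE R n (.of R A)) {M : ModuleCat.{0} R}
    (hM : IsSyzygy R n M) :
    ∃ S : ShortComplex (ModuleCat.{0} R), S.ShortExact ∧ Projective S.X₂ ∧ IsSyzygy R n S.X₁ ∧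
      (baseChangeShortComplex A S).ShortExact ∧ Projective (baseChangeShortComplex A S).X₂ ∧
      S.X₃ = M := by
  have hS := M.shortExact_projectiveShortComplex
  have hfree : Module.Free R M.projectiveShortComplex.X₂ := inferInstance
  exact ⟨M.projectiveShortComplex, hS, (IsProjective.iff_projective _).mp inferInstance,
    (IsSyzygy.succ hS inferInstance hM).of_succ, hA.shortExact_baseChange hS hM,
    (IsProjective.iff_projective _).mp inferInstance, rfl⟩

lemma FlatDimLE.subsingleton_ext_baseChange_iff (hA : FlatDimLE R n (.of R A))
    {M : ModuleCat.{0} R} (hM : IsSyzygy R n M) (L : Type) [AddCommGroup L] [Module R L]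
    [Module A L] [IsScalarTower R A L] {k : ℕ} (hk : 0 < k) :
    Subsingleton (Abelian.Ext (ModuleCat.of A (A ⊗[R] M)) (.of A L) k) ↔
      Subsingleton (Abelian.Ext M (.of R L) k) := by
  induction k, hk using Nat.le_induction generalizing M with
  | base =>
    obtain ⟨S, hS, _, _, hAS, _, rfl⟩ := hA.exists_shortExact_baseChange hM
    exact ((subsingleton_ext_one_iff_surjective_lcomp hAS _).trans
      (surjective_lcomp_baseChange_iff S.f.hom L)).trans
      (subsingleton_ext_one_iff_surjective_lcomp hS _).symm
  | succ k hk ih =>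
    obtain ⟨S, hS, _, hX₁, hAS, _, rfl⟩ := hA.exists_shortExact_baseChange hM
    exact ((subsingleton_ext_X₁_iff hAS _ hk).symm.trans (ih hX₁)).trans
      (subsingleton_ext_X₁_iff hS _ hk)

end BaseChange

section Nakayama

open TensorProduct

variable {R A E : Type*} [CommRing R] [CommRing A] [Algebra R A] [AddCommGroup E] [Module R E]

lemma subsingleton_of_subsingleton_tensorProduct
    (hmax : ∀ m : Ideal R, m.IsMaximal → m.map (algebraMap R A) ≠ ⊤) [Module.Finite R E]
    [Subsingleton (A ⊗[R] E)] : Subsingleton E := by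
  by_contra hE
  rw [not_subsingleton_iff_nontrivial] at hE
  obtain ⟨N, hN⟩ := IsCoatomic.exists_coatom (Submodule R E)
  have := isSimpleModule_iff_isCoatom.mpr hN
  obtain ⟨m, hm, ⟨e⟩⟩ := isSimpleModule_iff_quot_maximal.mp this
  have hsurj : Function.Surjective ((e.toLinearMap ∘ₗ N.mkQ).lTensor A) :=
    LinearMap.lTensor_surjective A (e.surjective.comp N.mkQ_surjective)
  have : Subsingleton (A ⊗[R] (R ⧸ m)) := hsurj.subsingleton
  have := (tensorQuotEquivQuotSMul A m).symm.toEquiv.subsingleton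
  rw [Submodule.Quotient.subsingleton_iff, Ideal.smul_top_eq_map] at this
  exact hmax m hm (by simpa using this)

lemma surjective_of_surjective_lTensor {E' : Type*}
    (hmax : ∀ m : Ideal R, m.IsMaximal → m.map (algebraMap R A) ≠ ⊤) [AddCommGroup E'] [Module R E']
    [Module.Finite R E'] {f : E →ₗ[R] E'}
    (hf : Function.Surjective (f.lTensor A)) : Function.Surjective f := by
  have hzero : Subsingleton (A ⊗[R] (E' ⧸ LinearMap.range f)) := by
    refine subsingleton_of_forall_eq 0 fun x ↦ ?_
    obtain ⟨y, rfl⟩ := LinearMap.lTensor_surjective A (LinearMap.range f).mkQ_surjective x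
    exact (lTensor_exact A f.exact_map_mkQ_range (LinearMap.range f).mkQ_surjective y).mpr (hf y)
  have := subsingleton_of_subsingleton_tensorProduct hmax (E := E' ⧸ LinearMap.range f)
  rwa [Submodule.Quotient.subsingleton_iff, LinearMap.range_eq_top] at this

end Nakayama

section Descent

open MonoidalCategory TensorProduct

variable {R A : Type} [CommRing R] [IsNoetherianRing R] [CommRing A] [Algebra R A]
  {n : ℕ} {M N : ModuleCat.{0} R} [Module.Finite R M] [Module.Finite R N]

lemma FlatDimLE.subsingleton_ext_of_tensor (hA : FlatDimLE R n (.of R A))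
    (hmax : ∀ m : Ideal R, m.IsMaximal → m.map (algebraMap R A) ≠ ⊤)
    (hN : IsSyzygy R n N) {k : ℕ} (hk : 0 < k)
    (h : ∀ i, k < i → Subsingleton (Abelian.Ext M N i))
    (hAN : Subsingleton (Abelian.Ext M (ModuleCat.of R A ⊗ N) k)) :
    Subsingleton (Abelian.Ext M N k) := by
  induction k, hk using Nat.le_induction generalizing M with
  | base =>
    obtain ⟨S, hS, _, _, _, _, rfl⟩ := exists_shortExact_finite_projective M
    rw [subsingleton_ext_one_iff_surjective_lcomp hS] at hAN ⊢
    have hX₁ : ∀ i, 0 < i → Subsingleton (Abelian.Ext S.X₁ N i) := fun i hi ↦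
      (subsingleton_ext_X₁_iff hS N hi).mpr (h (i + 1) (by lia))
    have hcomp : Function.Surjective (S.f.hom.lcomp R (A ⊗[R] N) ∘ₗ
        lTensorHomToHomLTensor (.id R) S.X₂ A N) :=
      hAN.comp bijective_lTensorHomToHomLTensor_of_projective.surjective
    rw [← lTensorHomToHomLTensor_comp_lTensor_lcomp, LinearMap.coe_comp] at hcomp
    exact surjective_of_surjective_lTensor hmax (hcomp.of_comp_left
      (hA.bijective_lTensorHomToHomLTensor hN hX₁).injective)
  | succ k hk ih =>
    obtain ⟨S, hS, _, _, _, _, rfl⟩ := exists_shortExact_finite_projective M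
    rw [← subsingleton_ext_X₁_iff hS _ hk] at hAN ⊢
    exact ih (fun i hi ↦ (subsingleton_ext_X₁_iff hS N (by lia)).mpr (h (i + 1) (by lia))) hAN

lemma FlatDimLE.forall_subsingleton_ext_of_tensor (hA : FlatDimLE R n (.of R A))
    (hmax : ∀ m : Ideal R, m.IsMaximal → m.map (algebraMap R A) ≠ ⊤)
    (hN : IsSyzygy R n N) {t : ℕ} (h : ∀ k, t < k → Subsingleton (Abelian.Ext M N k))
    (hAN : ∀ k, 0 < k → Subsingleton (Abelian.Ext M (ModuleCat.of R A ⊗ N) k)) :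
    ∀ k, 0 < k → Subsingleton (Abelian.Ext M N k) := by
  induction t with
  | zero => exact h
  | succ t ih =>
    refine ih fun k hk ↦ ?_
    obtain rfl | hlt := Nat.eq_or_lt_of_le (Nat.succ_le_of_lt hk)
    · exact hA.subsingleton_ext_of_tensor hmax hN t.succ_pos h (hAN _ t.succ_pos)
    · exact h k hlt

end Descent

section Reduction

open MonoidalCategory

lemma subsingleton_ext_of_iso {C : Type*} [Category* C] [Abelian C] [HasExt C] {X Y Y' : C}
    (e : Y ≅ Y') {k : ℕ} (h : Subsingleton (Abelian.Ext X Y k)) :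
    Subsingleton (Abelian.Ext X Y' k) :=
  have : Subsingleton ((Abelian.extFunctorObj X k).obj Y) := h
  ((Abelian.extFunctorObj X k).mapIso e).addCommGroupIsoToAddEquiv.symm.toEquiv.subsingleton

variable {R : Type u} [CommRing R] [IsNoetherianRing R]

lemma subsingleton_ext_of_flat {M F : ModuleCat.{u} R} [Module.Finite R M] [Module.Flat R F] {k : ℕ}
    (hk : 0 < k) (h : Subsingleton (Abelian.Ext M (.of R R) k)) :
    Subsingleton (Abelian.Ext M F k) :=
  subsingleton_ext_of_iso (ρ_ F) (subsingleton_ext_tensor_of_flat M (.of R R) F hk h)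

lemma subsingleton_ext_self_X₁_iff {S : ShortComplex (ModuleCat.{u} R)} (hS : S.ShortExact)
    [Projective S.X₂] [Module.Flat R S.X₂] [Module.Finite R S.X₃]
    (h : ∀ k, 0 < k → Subsingleton (Abelian.Ext S.X₃ (.of R R) k)) {k : ℕ} (hk : 0 < k) :
    Subsingleton (Abelian.Ext S.X₁ S.X₁ k) ↔ Subsingleton (Abelian.Ext S.X₃ S.X₃ k) := by
  rw [subsingleton_ext_X₁_iff hS _ hk]
  exact ⟨subsingleton_ext_X₃ hS _ k (subsingleton_ext_of_flat hk (h k hk)),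
    fun h₃ ↦ subsingleton_ext_X₁ hS _ k h₃
      (subsingleton_ext_of_flat k.succ_pos (h (k + 1) k.succ_pos))⟩

lemma exists_isSyzygy_subsingleton_ext_self_iff (n : ℕ) (M : ModuleCat.{u} R) [Module.Finite R M]
    (h : ∀ k, 0 < k → Subsingleton (Abelian.Ext M (.of R R) k)) :
    ∃ K : ModuleCat.{u} R, Module.Finite R K ∧ IsSyzygy R n K ∧
      (∀ k, 0 < k → Subsingleton (Abelian.Ext K (.of R R) k)) ∧
      ∀ k, 0 < k → (Subsingleton (Abelian.Ext K K k) ↔ Subsingleton (Abelian.Ext M M k)) := by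
  induction n with
  | zero => exact ⟨M, ‹_›, .zero M, h, fun _ _ ↦ Iff.rfl⟩
  | succ n ih =>
    obtain ⟨K, _, hK, hKR, hKK⟩ := ih
    obtain ⟨S, hS, _, _, _, _, rfl⟩ := exists_shortExact_finite_projective K
    exact ⟨S.X₁, ‹_›, .succ hS inferInstance hK,
      fun k hk ↦ (subsingleton_ext_X₁_iff hS _ hk).mpr (hKR (k + 1) k.succ_pos),
      fun k hk ↦ (subsingleton_ext_self_X₁_iff hS hKR hk).trans (hKK k hk)⟩

end Reduction

section Main

open MonoidalCategory TensorProduct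

lemma sac_iff_s13 (R : Type) [CommRing R] :
    SAC R ↔ ∀ (M : ModuleCat.{0} R) [Module.Finite R M],
      (∀ k, 0 < k → Subsingleton (Abelian.Ext M (.of R R) k)) →
      (∃ t, ∀ k, t < k → Subsingleton (Abelian.Ext M M k)) →
      ∀ k, 0 < k → Subsingleton (Abelian.Ext M M k) := by
  have hExt : ∀ (M N : ModuleCat.{0} R) (t : ℕ),
      (∀ k, t < k → Subsingleton (ExtGroup R M N k)) ↔
        ∀ k, t < k → Subsingleton (Abelian.Ext M N k) := fun M N t ↦
    forall₂_congr fun k hk ↦ subsingleton_extGroup_iff M N (by lia)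
  simp only [SAC, hExt]

theorem stmt_13_general (R S : Type) [CommRing R] [CommRing S] [IsNoetherianRing R] [Algebra R S]
    (hmax : ∀ m : Ideal R, m.IsMaximal → m.map (algebraMap R S) ≠ ⊤)
    (hfd : ∃ n : ℕ, FlatDimLE R n (ModuleCat.of R S)) (hS : SAC S) : SAC R := by
  rw [sac_iff_s13] at hS ⊢
  intro M₀ _ hM₀R ⟨t, hM₀⟩
  obtain ⟨n, hn⟩ := hfd
  obtain ⟨M, _, hM, hMR, hMM₀⟩ := exists_isSyzygy_subsingleton_ext_self_iff n M₀ hM₀R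
  have hMM : ∀ k, t < k → Subsingleton (Abelian.Ext M M k) := fun k hk ↦
    (hMM₀ k (by lia)).mpr (hM₀ k hk)
  have hSR : ∀ k, 0 < k → Subsingleton (Abelian.Ext (.of S (S ⊗[R] M)) (ModuleCat.of S S) k) :=
    fun k hk ↦ (hn.subsingleton_ext_baseChange_iff hM S hk).mpr <| subsingleton_ext_of_iso
      (ρ_ (ModuleCat.of R S)) (hn.subsingleton_ext_tensor (.of_flat n _) hMR k hk)
  have hSM : ∀ k, t < k →
      Subsingleton (Abelian.Ext (.of S (S ⊗[R] M)) (ModuleCat.of S (S ⊗[R] M)) k) :=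
    fun k hk ↦ (hn.subsingleton_ext_baseChange_iff hM (S ⊗[R] M) (by lia)).mpr
      (hn.subsingleton_ext_tensor hM hMM k hk)
  have hMSM : ∀ k, 0 < k → Subsingleton (Abelian.Ext M (ModuleCat.of R S ⊗ M) k) := fun k hk ↦
    (hn.subsingleton_ext_baseChange_iff hM (S ⊗[R] M) hk).mp (hS _ hSR ⟨t, hSM⟩ k hk)
  exact fun k hk ↦
    (hMM₀ k hk).mp (hn.forall_subsingleton_ext_of_tensor hmax hM hMM hMSM k hk)

end Main

/-- Descent of (SAC) along a local homomorphism of finite flat dimension. -/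
theorem stmt_13 (R S : Type) [CommRing R] [CommRing S]
    [IsNoetherianRing R] [IsNoetherianRing S] [IsLocalRing R] [IsLocalRing S]
    [Algebra R S] (hloc : IsLocalHom (algebraMap R S))
    (hfd : ∃ n : ℕ, FlatDimLE R n (ModuleCat.of R S))
    (hS : SAC S) : SAC R :=
  stmt_13_general R S (fun _ hm ↦ IsLocalRing.eq_maximalIdeal hm ▸
    (IsLocalRing.map_maximalIdeal_lt_top (algebraMap R S)).ne) hfd hS
end
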